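/- Let ρ : Fin r → Equiv.Perm (Fin n) be a string C-group in the blocks-of-size-2 setup with m = n/2 ≥ 7 and r ≥ n/2. If the set R ∪ C has exactly 3 elements, then the image of φ is either all of Equiv.Perm (Fin m) or equal to alternatingGroup (Fin m). -/

import Mathlib

/-- A string group generated by involutions (sggi): each generator has order 2 and
nonconsecutive generators commute. -/
def IsSggi {n r : ℕ} (ρ : Fin r → Equiv.Perm (Fin n)) : Prop :=
  (∀ i, orderOf (ρ i) = 2) ∧
  ∀ i j : Fin r, 1 < |((i : ℕ) : ℤ) - ((j : ℕ) : ℤ)| → (ρ i * ρ j) ^ 2 = 1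

/-- A string C-group: an sggi satisfying the intersection property. -/
def IsStringC {n r : ℕ} (ρ : Fin r → Equiv.Perm (Fin n)) : Prop :=
  IsSggi ρ ∧ ∀ J K : Set (Fin r),
    Subgroup.closure (ρ '' J) ⊓ Subgroup.closure (ρ '' K) =
      Subgroup.closure (ρ '' (J ∩ K))

/-
Because the fibres of `b` are maximal blocks, the image of `φ` is a primitive group on `m` points,
and it is generated by an independent string of at least `m - 3` involutions. Taking every other
generator of the string yields elementary abelian 2-groups, so large in comparison with the number
of points that counting orbits produces a nontrivial element moving at most four points.

If it moves at most three points, a theorem of Jordan applies. If it is a double transposition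
`(a b)(c d)`, then either two conjugates have supports with an odd intersection, and one again
finds a 3-cycle, or all the supports of conjugates (tetrads) meet evenly. In the latter case the
points can be labelled injectively by vectors of `𝔽₂³` in such a way that the group acts by affine
maps; but in `GL₃(2)` an element centralizing an involution `c` has its square in `{1, c}`, which
leaves no room for a long independent string.
-/

open Equiv.Perm

section CommutingInvolutions

variable {G : Type*} [Group G]

theorem commute_iff_mul_sq_eq_one {a b : G} (ha : a ^ 2 = 1) (hb : b ^ 2 = 1) :
    Commute a b ↔ (a * b) ^ 2 = 1 := by
  refine ⟨fun h => by rw [h.mul_pow, ha, hb, one_mul], fun h => ?_⟩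
  rw [pow_two] at ha hb h
  have hinv := inv_eq_of_mul_eq_one_right h
  rw [mul_inv_rev, inv_eq_of_mul_eq_one_right ha, inv_eq_of_mul_eq_one_right hb] at hinv
  exact hinv.symm

theorem commute_pow_of_sq_eq_one {a b : G} (ha : a ^ 2 = 1) (hb : b ^ 2 = 1) {n : ℕ}
    (h : ((a * b) ^ n) ^ 2 = 1) : Commute a ((a * b) ^ n) := by
  have hinv {g : G} (hg : g ^ 2 = 1) : g = g⁻¹ :=
    (inv_eq_of_mul_eq_one_right (by rw [← pow_two, hg])).symm
  have hsemi : SemiconjBy a (a * b) (a * b)⁻¹ := by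
    rw [SemiconjBy, mul_inv_rev, ← hinv ha, ← hinv hb, ← mul_assoc, ← pow_two, ha, one_mul,
      mul_assoc, ← pow_two, ha, mul_one]
  have hsemi' := hsemi.pow_right n
  rwa [inv_pow, ← hinv h] at hsemi'

theorem isMulCommutative_of_sq_eq_one {K : Subgroup G} (hK : ∀ g ∈ K, g ^ 2 = 1) :
    IsMulCommutative K :=
  ⟨⟨Commute.of_orderOf_dvd_two fun g => orderOf_dvd_of_pow_eq_one (Subtype.ext (hK g g.2))⟩⟩

theorem sq_eq_one_of_mem_closure {S : Set G} (hsq : ∀ a ∈ S, a ^ 2 = 1)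
    (hcomm : ∀ a ∈ S, ∀ b ∈ S, Commute a b) {g : G} (hg : g ∈ Subgroup.closure S) :
    g ^ 2 = 1 := by
  have : IsMulCommutative (Subgroup.closure S) := Subgroup.isMulCommutative_closure hcomm
  induction hg using Subgroup.closure_induction with
  | mem a ha => exact hsq a ha
  | one => exact one_pow 2
  | mul x y hx hy hx2 hy2 => rw [Commute.mul_pow (setLike_mul_comm hx hy), hx2, hy2, one_mul]
  | inv x _ hx2 => rw [inv_pow, hx2, inv_one]

theorem sq_eq_one_of_mem_zpowers {c g : G} (hc : c ^ 2 = 1) (hg : g ∈ Subgroup.zpowers c) :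
    g ^ 2 = 1 := by
  rw [Subgroup.zpowers_eq_closure] at hg
  exact sq_eq_one_of_mem_closure (by rintro _ rfl; exact hc)
    (by rintro _ rfl _ rfl; exact Commute.refl _) hg

theorem commute_of_mem_zpowers {c d : G} (h : Commute d c) :
    ∀ g ∈ Subgroup.zpowers c, Commute d g := by
  rintro _ ⟨n, rfl⟩
  exact h.zpow_right n

theorem card_zpowers_of_sq_eq_one {c : G} (hc : c ^ 2 = 1) (hne : c ≠ 1) :
    Nat.card (Subgroup.zpowers c) = 2 := by
  rw [Nat.card_zpowers, orderOf_eq_prime hc hne]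

theorem disjoint_zpowers_of_notMem {K : Subgroup G} {d : G} (hd : d ^ 2 = 1) (hdK : d ∉ K) :
    Disjoint (Subgroup.zpowers d) K := by
  refine Subgroup.disjoint_def.2 ?_
  rintro _ ⟨m, rfl⟩ hm
  have hd' : d ^ (2 : ℤ) = 1 := by exact_mod_cast hd
  rcases Int.even_or_odd' m with ⟨t, rfl | rfl⟩
  · simp only [zpow_mul, hd', one_zpow]
  · refine absurd ?_ hdK
    simpa only [zpow_add, zpow_mul, hd', one_zpow, zpow_one, one_mul] using hm

theorem sq_eq_one_of_mem_zpowers_sup {K : Subgroup G} (hK : ∀ g ∈ K, g ^ 2 = 1) {d : G}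
    (hd : d ^ 2 = 1) (hcomm : ∀ g ∈ K, Commute d g) {g : G} (hg : g ∈ Subgroup.zpowers d ⊔ K) :
    g ^ 2 = 1 := by
  have := isMulCommutative_of_sq_eq_one hK
  rw [Subgroup.zpowers_eq_closure, ← K.closure_eq, ← Subgroup.closure_union] at hg
  refine sq_eq_one_of_mem_closure ?_ ?_ hg
  · rintro a (rfl | ha)
    exacts [hd, hK a ha]
  · rintro a (rfl | ha) b (rfl | hb)
    exacts [Commute.refl _, hcomm b hb, (hcomm a ha).symm, setLike_mul_comm ha hb]

theorem card_zpowers_sup {K : Subgroup G} {d : G} (hd : d ^ 2 = 1) (hdK : d ∉ K)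
    (hcomm : ∀ g ∈ K, Commute d g) :
    Nat.card ↥(Subgroup.zpowers d ⊔ K) = 2 * Nat.card K := by
  have hcommute (z : Subgroup.zpowers d) (k : K) :
      Commute ((Subgroup.zpowers d).subtype z) (K.subtype k) := by
    obtain ⟨_, n, rfl⟩ := z
    exact (hcomm k k.2).zpow_left n
  have hinj : Function.Injective (MonoidHom.noncommCoprod _ _ hcommute) := by
    refine (MonoidHom.noncommCoprod_injective _ _ _).2
      ⟨Subgroup.subtype_injective _, K.subtype_injective, ?_⟩
    rw [Subgroup.range_subtype, Subgroup.range_subtype]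
    exact disjoint_zpowers_of_notMem hd hdK
  have hrange := MonoidHom.noncommCoprod_range _ _ hcommute
  rw [Subgroup.range_subtype, Subgroup.range_subtype] at hrange
  rw [← hrange, ← Nat.card_congr (MonoidHom.ofInjective hinj).toEquiv, Nat.card_prod,
    card_zpowers_of_sq_eq_one hd fun h => hdK (h ▸ K.one_mem)]

theorem card_closure_range_of_commuting_involutions {ι : Type*} [Fintype ι] {f : ι → G}
    (hsq : ∀ i, f i ^ 2 = 1) (hcomm : ∀ i j, Commute (f i) (f j))
    (hind : ∀ i, f i ∉ Subgroup.closure (f '' {i}ᶜ)) :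
    Nat.card (Subgroup.closure (Set.range f)) = 2 ^ Fintype.card ι := by
  have hcommute : Pairwise fun i j => ∀ x y : G, x ∈ Subgroup.zpowers (f i) →
      y ∈ Subgroup.zpowers (f j) → Commute x y := by
    rintro i j - _ _ ⟨m, rfl⟩ ⟨n, rfl⟩
    exact (hcomm i j).zpow_zpow m n
  have hindep : iSupIndep fun i => Subgroup.zpowers (f i) := fun i =>
    (disjoint_zpowers_of_notMem (hsq i) (hind i)).mono_right <| iSup₂_le fun j hj =>
      Subgroup.zpowers_le.2 (Subgroup.subset_closure (Set.mem_image_of_mem f hj))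
  have hcard (i) : Nat.card (Subgroup.zpowers (f i)) = 2 :=
    card_zpowers_of_sq_eq_one (hsq i) fun h => hind i (h ▸ Subgroup.one_mem _)
  have hrange : Subgroup.closure (Set.range f) = (Subgroup.noncommPiCoprod hcommute).range := by
    simp only [Subgroup.noncommPiCoprod_range, Subgroup.zpowers_eq_closure,
      ← Subgroup.closure_iUnion, Set.iUnion_singleton_eq_range]
  rw [hrange, ← Nat.card_congr (MonoidHom.ofInjective
    (Subgroup.injective_noncommPiCoprod_of_iSupIndep hindep)).toEquiv, Nat.card_pi]
  simp only [hcard, Finset.prod_const, Finset.card_univ]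

end CommutingInvolutions

section PrimitiveAction

variable {G Ω : Type*} [Group G] [MulAction G Ω]

theorem eq_bot_or_eq_top_of_invariant_setoid [MulAction.IsPreprimitive G Ω] (s : Setoid Ω)
    (hs : ∀ (g : G) {p q}, s p q → s (g • p) (g • q)) : s = ⊥ ∨ s = ⊤ := by
  have hblock (p : Ω) : MulAction.IsBlock G {q | s p q} := by
    refine MulAction.isBlock_iff_smul_eq_of_mem.2 fun g q hq hgq => ?_
    have hgp : s p (g • p) := s.trans hgq (s.symm (hs g hq))
    ext x
    rw [Set.mem_smul_set_iff_inv_smul_mem]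
    refine ⟨fun hx => s.trans hgp ?_, fun hx => ?_⟩
    · simpa using hs g hx
    · simpa using hs g⁻¹ (s.trans (s.symm hgp) hx)
  by_cases h : ∃ p, ({q | s p q} : Set Ω) = Set.univ
  · obtain ⟨p, hp⟩ := h
    have hall (q) : s p q := hp.ge (Set.mem_univ q)
    exact Or.inr (Setoid.eq_top_iff.2 fun q q' => s.trans (s.symm (hall q)) (hall q'))
  · refine Or.inl (le_bot_iff.1 fun p q hpq => ?_)
    exact ((hblock p).subsingleton_or_eq_univ.resolve_right (not_exists.1 h p)) (s.refl p) hpq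

theorem eq_bot_or_isPretransitive_of_normal [MulAction.IsQuasiPreprimitive G Ω] [FaithfulSMul G Ω]
    (N : Subgroup G) [N.Normal] : N = ⊥ ∨ MulAction.IsPretransitive N Ω := by
  refine or_iff_not_imp_right.2 fun hN => (Subgroup.eq_bot_iff_forall N).2 fun g hg => ?_
  have hfix : MulAction.fixedPoints N Ω = Set.univ :=
    not_not.1 fun h => hN (MulAction.IsQuasiPreprimitive.isPretransitive_of_normal h)
  exact eq_of_smul_eq_smul fun p : Ω =>
    ((Set.eq_univ_iff_forall.1 hfix p) ⟨g, hg⟩).trans (one_smul G p).symm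

theorem card_le_two_of_mem_center [MulAction.IsQuasiPreprimitive G Ω] [FaithfulSMul G Ω] {c : G}
    (hc : c ∈ Subgroup.center G) (hsq : c ^ 2 = 1) (hne : c ≠ 1) : Nat.card Ω ≤ 2 := by
  have hnormal : (Subgroup.zpowers c).Normal := by
    refine ⟨fun x hx g => ?_⟩
    have hxc := Subgroup.mem_center_iff.1 ((Subgroup.zpowers_le.2 hc) hx) g
    rwa [hxc, mul_inv_cancel_right]
  have htrans := (eq_bot_or_isPretransitive_of_normal (Ω := Ω) (Subgroup.zpowers c)).resolve_left
    (Subgroup.zpowers_ne_bot.2 hne)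
  have hord : Nat.card (Subgroup.zpowers c) = 2 := card_zpowers_of_sq_eq_one hsq hne
  have : Finite (Subgroup.zpowers c) := Nat.finite_of_card_ne_zero (by omega)
  cases isEmpty_or_nonempty Ω
  · simp
  · obtain ⟨p⟩ := ‹Nonempty Ω›
    exact hord ▸ Nat.card_le_card_of_surjective _ (MulAction.surjective_smul (Subgroup.zpowers c) p)

end PrimitiveAction

section Jordan

variable {Ω : Type*} [Fintype Ω] [DecidableEq Ω] {H : Subgroup (Equiv.Perm Ω)}

theorem alternatingGroup_le_of_card_support_le_three (hH : MulAction.IsPreprimitive H Ω)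
    {g : Equiv.Perm Ω} (hg : g ∈ H) (hg1 : g ≠ 1) (hcard : g.support.card ≤ 3) :
    alternatingGroup Ω ≤ H := by
  have h2 := two_le_card_support_of_ne_one hg1
  interval_cases h : g.support.card
  · exact subgroup_eq_top_of_isPreprimitive_of_isSwap_mem hH g (card_support_eq_two.1 h) hg ▸ le_top
  · exact alternatingGroup_le_of_isPreprimitive_of_isThreeCycle_mem hH
      (card_support_eq_three_iff.1 h) hg

theorem eq_top_or_eq_alternatingGroup (hH : alternatingGroup Ω ≤ H) :
    H = ⊤ ∨ H = alternatingGroup Ω := by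
  cases subsingleton_or_nontrivial Ω
  · exact Or.inl (Subsingleton.elim _ _)
  have hindex := Subgroup.relIndex_mul_index hH
  rw [alternatingGroup.index_eq_two] at hindex
  rcases (Nat.dvd_prime Nat.prime_two).1 (Dvd.intro_left _ hindex) with h | h
  · exact Or.inl (Subgroup.index_eq_one.1 h)
  · exact Or.inr (eq_alternatingGroup_of_index_eq_two h)

end Jordan

section OrbitCount

theorem two_mul_le_two_pow (x : ℕ) : 2 * x ≤ 2 ^ x := by
  cases x with
  | zero => simp
  | succ x => rw [pow_succ']; have := x.lt_two_pow_self; omega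

theorem exists_eq_three_of_excess_le {ι : Type*} [Fintype ι] {a : ι → ℕ}
    (hge : 4 ≤ ∑ i, 2 ^ a i)
    (h : ∀ S T : Finset ι, Disjoint S T → ∑ i ∈ S, 2 ^ a i ≤ 4 →
      ∑ i ∈ S, 2 ^ a i + ∑ i ∈ T, 2 ^ a i ≤ 2 * ∑ i ∈ T, a i + 3) :
    ∃ i, a i = 3 ∧ ∀ i' ≠ i, a i' = 0 := by
  classical
  have hle3 (i) : a i ≤ 3 := by
    by_contra! h4
    obtain ⟨t, ht⟩ := Nat.exists_eq_add_of_le' h4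
    have h1 : 2 ^ a i ≤ 2 * a i + 3 := by simpa using h ∅ {i} (by simp) (by simp)
    have h2 := two_mul_le_two_pow (t + 3)
    rw [ht, pow_succ'] at h1
    omega
  have hne2 (i) : a i ≠ 2 := fun h2 => by simpa [h2] using h {i} ∅ (by simp) (by simp [h2])
  obtain ⟨i, hi⟩ : ∃ i, a i = 3 := by
    by_contra! hne3
    have h01 (i) : a i = 0 ∨ a i = 1 := by have := hle3 i; have := hne2 i; have := hne3 i; omega
    have hone : (Finset.univ.filter fun i => a i = 1).card ≤ 1 := by
      refine Finset.card_le_one.2 fun i hi i' hi' => by_contra fun hii' => ?_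
      have hsum : ∑ t ∈ {i, i'}, 2 ^ a t = 4 := by
        rw [Finset.sum_pair hii', (Finset.mem_filter.1 hi).2, (Finset.mem_filter.1 hi').2]; rfl
      simpa [hsum] using h {i, i'} ∅ (by simp) hsum.le
    have hS : ∑ i with a i = 1, 2 ^ a i = (Finset.univ.filter fun i => a i = 1).card * 2 := by
      rw [Finset.sum_congr rfl fun i hi => by rw [(Finset.mem_filter.1 hi).2], Finset.sum_const,
        smul_eq_mul, pow_one]
    have hT : ∑ i with ¬ a i = 1, a i = 0 :=
      Finset.sum_eq_zero fun i hi => (h01 i).resolve_right (Finset.mem_filter.1 hi).2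
    have hST := h _ _ (Finset.disjoint_filter_filter_not Finset.univ Finset.univ fun i => a i = 1)
      (by omega)
    rw [Finset.sum_filter_add_sum_filter_not, hT] at hST
    omega
  refine ⟨i, hi, fun i' hii' => ?_⟩
  have hne1 : a i' ≠ 1 := fun h1 => by
    simpa [hi, h1] using h {i'} {i} (by simpa using hii') (by simp [h1])
  have hne3 : a i' ≠ 3 := fun h3 => by
    simpa [Finset.sum_pair hii', hi, h3] using h ∅ {i', i} (by simp) (by simp)
  have := hle3 i'
  have := hne2 i'
  omega

theorem eq_three_of_sum_two_pow_le {ι : Type*} [Fintype ι] [DecidableEq ι] {a : ι → ℕ} {j : ℕ}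
    (hge : 4 ≤ ∑ i, 2 ^ a i) (hle : ∑ i, 2 ^ a i ≤ 2 * j + 3)
    (h : ∀ S : Finset ι, ∑ i ∈ S, 2 ^ a i ≤ 4 → j ≤ ∑ i ∈ Sᶜ, a i) :
    j = 3 ∧ ∃ i, a i = 3 := by
  obtain ⟨i, hi, hzero⟩ := exists_eq_three_of_excess_le hge fun S T hST hS => by
    have hj := h S hS
    have hTS : T ⊆ Sᶜ := Finset.subset_compl_iff_disjoint_left.2 hST
    have hrest : 2 * ∑ i ∈ Sᶜ \ T, a i ≤ ∑ i ∈ Sᶜ \ T, 2 ^ a i := by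
      rw [Finset.mul_sum]
      exact Finset.sum_le_sum fun i _ => two_mul_le_two_pow (a i)
    rw [← Finset.sum_sdiff hTS] at hj
    rw [← Finset.sum_add_sum_compl S, ← Finset.sum_sdiff hTS] at hle
    omega
  refine ⟨le_antisymm ?_ ?_, i, hi⟩
  · have := h ∅ (by simp)
    rwa [Finset.compl_empty, Fintype.sum_eq_single i hzero, hi] at this
  · have : 2 ^ a i ≤ ∑ i, 2 ^ a i :=
      Finset.single_le_sum (f := fun i => 2 ^ a i) (fun _ _ => Nat.zero_le _) (Finset.mem_univ i)
    rw [hi] at this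
    omega

open MulAction

variable {E Ω : Type*} [Group E] [IsMulCommutative E] [MulAction E Ω]

theorem smul_eq_self_of_mem_orbit {g : E} {p q : Ω} (hg : g • p = p) (hq : q ∈ orbit E p) :
    g • q = q := by
  obtain ⟨h, rfl⟩ := hq
  rw [smul_smul, mul_comm', mul_smul, hg]

variable [Finite Ω]

theorem card_le_prod_card_orbit (T : Finset (orbitRel.Quotient E Ω))
    (hT : ∀ g : E, (∀ ω ∈ T, ∀ p ∈ ω.orbit, g • p = p) → g = 1) :
    Nat.card E ≤ ∏ ω ∈ T, Nat.card ω.orbit := by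
  let f (g : E) (ω : T) : ω.1.orbit :=
    g • ⟨ω.1.out, orbitRel.Quotient.mem_orbit.2 (Quotient.out_eq' _)⟩
  have hf : Function.Injective f := by
    intro g g' h
    refine inv_mul_eq_one.1 (hT _ fun ω hω p hp => smul_eq_self_of_mem_orbit (p := ω.out) ?_ ?_)
    · rw [mul_smul, inv_smul_eq_iff]
      exact (congrArg Subtype.val (congrFun h ⟨ω, hω⟩)).symm
    · rwa [← orbitRel.Quotient.orbit_eq_orbit_out ω Quotient.out_eq']
  calc Nat.card E ≤ Nat.card (∀ ω : T, ω.1.orbit) := Nat.card_le_card_of_injective f hf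
    _ = ∏ ω : T, Nat.card ω.1.orbit := Nat.card_pi
    _ = ∏ ω ∈ T, Nat.card ω.orbit := Finset.prod_coe_sort T fun ω => Nat.card ω.orbit

theorem exists_card_moved_le_four_or_exists_free_point {j : ℕ} (hE : Nat.card E = 2 ^ j)
    (hge : 4 ≤ Nat.card Ω) (hle : Nat.card Ω ≤ 2 * j + 3) :
    (∃ g : E, g ≠ 1 ∧ {p : Ω | g • p ≠ p}.ncard ≤ 4) ∨
      j = 3 ∧ ∃ p : Ω, ∀ g : E, g • p = p → g = 1 := by
  classical
  refine or_iff_not_imp_left.2 fun hsupp => ?_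
  push Not at hsupp
  have : Fintype (orbitRel.Quotient E Ω) := Fintype.ofFinite _
  have hcard (ω : orbitRel.Quotient E Ω) : Nat.card ω.orbit = (stabilizer E ω.out).index := by
    rw [index_stabilizer, ← orbitRel.Quotient.orbit_eq_orbit_out ω Quotient.out_eq',
      Nat.card_coe_set_eq]
  have horbit (ω : orbitRel.Quotient E Ω) : ∃ a, Nat.card ω.orbit = 2 ^ a := by
    have hdvd := (stabilizer E ω.out).index_dvd_card
    rw [hE, ← hcard] at hdvd
    exact ((Nat.dvd_prime_pow Nat.prime_two).1 hdvd).imp fun _ h => h.2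
  choose a ha using horbit
  have hsum : Nat.card Ω = ∑ ω, 2 ^ a ω := by
    rw [Nat.card_congr (selfEquivSigmaOrbits' E Ω), Nat.card_sigma]
    simp only [ha]
  rw [hsum] at hge hle
  obtain ⟨rfl, ω, hω⟩ := eq_three_of_sum_two_pow_le hge hle fun S hS => by
    refine (Nat.pow_le_pow_iff_right one_lt_two).1 ?_
    rw [← hE, ← Finset.prod_pow_eq_pow_sum]
    simp only [← ha] at hS ⊢
    refine card_le_prod_card_orbit Sᶜ fun g hg => by_contra fun hg1 => ?_
    have hsub : {p : Ω | g • p ≠ p} ⊆ ⋃ ω ∈ S, ω.orbit := by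
      refine fun p hp => Set.mem_iUnion₂.2 ⟨Quotient.mk'' p, ?_, orbitRel.Quotient.mem_orbit.2 rfl⟩
      refine by_contra fun hpS => hp (hg _ ?_ p (orbitRel.Quotient.mem_orbit.2 rfl))
      exact Finset.mem_compl.2 hpS
    have h4 := (Set.ncard_le_ncard hsub).trans (S.set_ncard_biUnion_le _)
    exact (hsupp g hg1).not_ge (h4.trans hS)
  have hfree : Nat.card (stabilizer E ω.out) = 1 := by
    have := Subgroup.card_mul_index (stabilizer E ω.out)
    rw [hE, ← hcard, ha, hω] at this
    omega
  exact ⟨rfl, ω.out, fun g hg => (Subgroup.mem_bot).1 (Subgroup.card_eq_one.1 hfree ▸ hg)⟩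

end OrbitCount

/-- A string of independent involutions: nonadjacent members commute and no member lies in the
subgroup generated by the others. -/
structure IsIndepString {G : Type*} [Group G] {k : ℕ} (β : Fin k → G) : Prop where
  sq_eq_one : ∀ i, β i ^ 2 = 1
  commute : ∀ i j : Fin k, (i : ℕ) + 1 < j → Commute (β i) (β j)
  notMem : ∀ i, β i ∉ Subgroup.closure (β '' {i}ᶜ)

namespace IsIndepString

section Basic

variable {G : Type*} [Group G] {k : ℕ} {β : Fin k → G}

theorem rev (hβ : IsIndepString β) : IsIndepString (β ∘ Fin.rev) where
  sq_eq_one i := hβ.sq_eq_one _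
  commute i j hij := (hβ.commute j.rev i.rev (by simp only [Fin.val_rev]; omega)).symm
  notMem i := by
    rw [Set.image_comp, Set.image_compl_eq Fin.rev_bijective, Set.image_singleton]
    exact hβ.notMem _

theorem of_map {G' : Type*} [Group G'] (f : G →* G') (hf : Function.Injective f)
    (hβ : IsIndepString fun i => f (β i)) : IsIndepString β where
  sq_eq_one i := hf (by rw [map_pow, map_one, hβ.sq_eq_one i])
  commute i j hij := hf (by rw [map_mul, map_mul]; exact hβ.commute i j hij)
  notMem i h := hβ.notMem i (by
    rw [← Function.comp_def f β, Set.image_comp, ← MonoidHom.map_closure]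
    exact ⟨β i, h, rfl⟩)

theorem ne_one (hβ : IsIndepString β) (i : Fin k) : β i ≠ 1 := fun h =>
  hβ.notMem i (h ▸ Subgroup.one_mem _)

theorem commute_of_ne (hβ : IsIndepString β) {i j : Fin k} (hij : (i : ℕ) + 1 ≠ j)
    (hji : (j : ℕ) + 1 ≠ i) : Commute (β i) (β j) := by
  rcases lt_trichotomy i j with h | rfl | h
  · exact hβ.commute i j (by omega)
  · exact Commute.refl _
  · exact (hβ.commute j i (by omega)).symm

theorem sq_eq_one_of_mem_closure_comp (hβ : IsIndepString β) {ι : Type*} {e : ι → Fin k}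
    (hsep : ∀ s t, (e s : ℕ) + 1 ≠ e t) {g : G} (hg : g ∈ Subgroup.closure (Set.range (β ∘ e))) :
    g ^ 2 = 1 := by
  refine sq_eq_one_of_mem_closure ?_ ?_ hg
  · rintro _ ⟨s, rfl⟩
    exact hβ.sq_eq_one _
  · rintro _ ⟨s, rfl⟩ _ ⟨t, rfl⟩
    exact hβ.commute_of_ne (hsep s t) (hsep t s)

theorem mul_sq_ne_one (hβ : IsIndepString β) {i j : Fin k} (hij : ¬ Commute (β i) (β j)) :
    (β i * β j) ^ 2 ≠ 1 := fun h =>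
  hij ((commute_iff_mul_sq_eq_one (hβ.sq_eq_one i) (hβ.sq_eq_one j)).2 h)

end Basic

section Action

variable {G Ω : Type*} [Group G] [MulAction G Ω] {k : ℕ} {β : Fin k → G}

theorem exists_card_moved_le_four_or_exists_free_point [Finite Ω] (hβ : IsIndepString β)
    {ι : Type*} [Fintype ι] {e : ι → Fin k} (he : Function.Injective e)
    (hsep : ∀ s t, (e s : ℕ) + 1 ≠ e t)
    (hge : 4 ≤ Nat.card Ω) (hle : Nat.card Ω ≤ 2 * Fintype.card ι + 3) :
    (∃ g : G, g ^ 2 = 1 ∧ g ≠ 1 ∧ {p : Ω | g • p ≠ p}.ncard ≤ 4) ∨ Fintype.card ι = 3 ∧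
      Nat.card (Subgroup.closure (Set.range (β ∘ e))) = 8 ∧
      ∃ p : Ω, ∀ g ∈ Subgroup.closure (Set.range (β ∘ e)), g • p = p → g = 1 := by
  have hcomm (s t) : Commute ((β ∘ e) s) ((β ∘ e) t) := hβ.commute_of_ne (hsep s t) (hsep t s)
  have hsq (t) : (β ∘ e) t ^ 2 = 1 := hβ.sq_eq_one _
  have hcard := card_closure_range_of_commuting_involutions hsq hcomm fun s h =>
    hβ.notMem (e s) <| Subgroup.closure_mono (by
      rintro _ ⟨t, hts, rfl⟩
      exact ⟨e t, fun h => hts (he h), rfl⟩) h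
  have hsq' : ∀ g ∈ Subgroup.closure (Set.range (β ∘ e)), g ^ 2 = 1 := fun _ =>
    hβ.sq_eq_one_of_mem_closure_comp hsep
  have := isMulCommutative_of_sq_eq_one hsq'
  rcases _root_.exists_card_moved_le_four_or_exists_free_point hcard hge hle with
    ⟨⟨g, hg⟩, hg1, h4⟩ | ⟨h3, p, hp⟩
  · exact Or.inl ⟨g, hsq' g hg, fun h => hg1 (Subtype.ext h), h4⟩
  · refine Or.inr ⟨h3, by rw [hcard, h3]; rfl, p, fun g hg h => ?_⟩
    exact congrArg Subtype.val (hp ⟨g, hg⟩ h)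

variable [FaithfulSMul G Ω] [MulAction.IsPreprimitive G Ω]

theorem not_commute_head (hβ : IsIndepString β) (hgen : Subgroup.closure (Set.range β) = ⊤)
    (hΩ : 2 < Nat.card Ω) (hk : 1 < k) : ¬ Commute (β ⟨0, by omega⟩) (β ⟨1, hk⟩) := by
  intro hcomm
  have hcentral : β ⟨0, by omega⟩ ∈ Subgroup.center G := by
    rw [← Subgroup.centralizer_univ, ← Subgroup.coe_top, ← hgen, Subgroup.centralizer_closure]
    rintro _ ⟨j, rfl⟩
    by_cases hj : (j : ℕ) = 1
    · obtain rfl : j = ⟨1, hk⟩ := Fin.ext hj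
      exact hcomm.symm
    · exact hβ.commute_of_ne (by simp) (by simpa using Ne.symm hj)
  exact hΩ.not_ge (card_le_two_of_mem_center hcentral (hβ.sq_eq_one _) (hβ.ne_one _))

theorem not_commute_tail (hβ : IsIndepString β) (hgen : Subgroup.closure (Set.range β) = ⊤)
    (hΩ : 2 < Nat.card Ω) (hk : 1 < k) :
    ¬ Commute (β ⟨k - 2, by omega⟩) (β ⟨k - 1, by omega⟩) := by
  have h0 : Fin.rev (⟨0, by omega⟩ : Fin k) = ⟨k - 1, by omega⟩ := Fin.ext (by simp [Fin.val_rev])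
  have h1 : Fin.rev (⟨1, hk⟩ : Fin k) = ⟨k - 2, by omega⟩ := Fin.ext (by simp [Fin.val_rev])
  have h := hβ.rev.not_commute_head (by rwa [Fin.rev_surjective.range_comp]) hΩ hk
  rw [Function.comp_apply, Function.comp_apply, h0, h1] at h
  exact fun hcomm => h hcomm.symm

end Action

end IsIndepString

section OrbitPermutations

open MulAction

set_option maxRecDepth 10000 in
theorem mul_pow_four_eq_one_of_card_eq_four {Q : Type*} [Finite Q] (hQ : Nat.card Q = 4)
    {s t : Equiv.Perm Q} (hs : s ^ 2 = 1) (ht : t ^ 2 = 1) (hfree : ∀ q, s q ≠ q) :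
    (s * t) ^ 4 = 1 := by
  have hfin : ∀ s t : Equiv.Perm (Fin 4), s ^ 2 = 1 → t ^ 2 = 1 → (∀ i, s i ≠ i) →
      (s * t) ^ 4 = 1 := by decide
  let f := (Finite.equivFinOfCardEq hQ).permCongrHom
  refine f.injective ?_
  rw [map_pow, map_mul, map_one]
  refine hfin (f s) (f t) ?_ ?_ fun i => ?_
  · rw [← map_pow, hs, map_one]
  · rw [← map_pow, ht, map_one]
  · have hfi : f s i = Finite.equivFinOfCardEq hQ (s ((Finite.equivFinOfCardEq hQ).symm i)) := rfl
    rw [hfi, Ne, ← Equiv.eq_symm_apply]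
    exact hfree _

theorem mul_eq_one_of_card_eq_two {Q : Type*} (hQ : Nat.card Q = 2) {s t : Equiv.Perm Q}
    (hs : ∀ q, s q ≠ q) (ht : ∀ q, t q ≠ q) : s * t = 1 :=
  Equiv.Perm.ext fun q => ((Nat.card_eq_two_iff' (t q)).1 hQ).unique (hs _) (ht q).symm

variable {G : Type*} (Ω : Type*) [Group G] [MulAction G Ω] (K : Subgroup G)

/-- The permutations of the orbits of `K` induced by the elements commuting with `K`. -/
def orbitPermHom : Subgroup.centralizer (K : Set G) →* Equiv.Perm (orbitRel.Quotient K Ω) :=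
  MonoidHom.toHomPerm
    { toFun z := Quotient.map' (fun p => (z : G) • p) (by
        rintro _ q ⟨k, rfl⟩
        refine ⟨k, ?_⟩
        change (k : G) • (z : G) • q = (z : G) • (k : G) • q
        rw [smul_smul, smul_smul, z.2 k k.2])
      map_one' := by
        funext ω
        induction ω using Quotient.inductionOn' with | h p => exact congrArg _ (one_smul G p)
      map_mul' x y := by
        funext ω
        induction ω using Quotient.inductionOn' with | h p => exact congrArg _ (mul_smul _ _ _) }

variable {K Ω}

theorem orbitPermHom_mk_eq_mk_iff {z : Subgroup.centralizer (K : Set G)} {p q : Ω} :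
    orbitPermHom Ω K z (Quotient.mk'' p) = (Quotient.mk'' q : orbitRel.Quotient K Ω) ↔
      (z : G) • p ∈ orbit K q :=
  Quotient.eq''

theorem sq_eq_one_of_orbitPermHom_eq_one [FaithfulSMul G Ω] (hK : ∀ g ∈ K, g ^ 2 = 1)
    {z : Subgroup.centralizer (K : Set G)} (hz : orbitPermHom Ω K z = 1) : (z : G) ^ 2 = 1 := by
  refine eq_of_smul_eq_smul fun p : Ω => ?_
  obtain ⟨k, hk : (k : G) • p = (z : G) • p⟩ :=
    orbitPermHom_mk_eq_mk_iff.1 (Equiv.Perm.ext_iff.1 hz (Quotient.mk'' p))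
  rw [pow_two, mul_smul, ← hk, smul_smul, ← z.2 k k.2, mul_smul, ← hk, smul_smul, ← pow_two,
    hK k k.2]

theorem orbitPermHom_apply_ne {z : Subgroup.centralizer (K : Set G)}
    (hz : ∀ k ∈ K, ∀ p : Ω, (z : G) • p ≠ k • p) (ω) : orbitPermHom Ω K z ω ≠ ω := by
  induction ω using Quotient.inductionOn' with | h p =>
  rw [Ne, orbitPermHom_mk_eq_mk_iff]
  rintro ⟨k, hk⟩
  exact hz k k.2 p hk.symm

theorem card_mul_card_orbitRel_quotient
    (hfree : ∀ g ∈ K, g ≠ 1 → ∀ p : Ω, g • p ≠ p) :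
    Nat.card (orbitRel.Quotient K Ω) * Nat.card K = Nat.card Ω := by
  have hstab (p : Ω) : stabilizer K p = ⊥ := (Subgroup.eq_bot_iff_forall _).2 fun g hg =>
    by_contra fun hg1 => hfree g g.2 (fun h => hg1 (Subtype.ext h)) p hg
  rw [Nat.card_congr (selfEquivOrbitsQuotientProd hstab), Nat.card_prod]

end OrbitPermutations

section EightPoints

open MulAction

variable {G Ω : Type*} [Group G] [MulAction G Ω]

theorem smul_ne_self_of_card_eq_eight (hΩ : Nat.card Ω = 8)
    (hlarge : ∀ g : G, g ^ 2 = 1 → g ≠ 1 → 4 < {p : Ω | g • p ≠ p}.ncard)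
    {E : Subgroup G} (hE : ∀ g ∈ E, g ^ 2 = 1) (hcard : Nat.card E = 8) {g : G} (hg : g ∈ E)
    (hg1 : g ≠ 1) (q : Ω) : g • q ≠ q := by
  have : Finite Ω := Nat.finite_of_card_ne_zero (by omega)
  have : Finite E := Nat.finite_of_card_ne_zero (by omega)
  have := isMulCommutative_of_sq_eq_one hE
  obtain ⟨h, hh1, h4⟩ | ⟨-, p, hp⟩ := exists_card_moved_le_four_or_exists_free_point (E := E)
    (Ω := Ω) (j := 3) hcard (by omega) (by omega)
  · exact absurd h4 (hlarge h (hE h h.2) fun h1 => hh1 (Subtype.ext h1)).not_ge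
  have hinj : Function.Injective fun h : E => h • p := fun h h' hhh' =>
    inv_mul_eq_one.1 (hp _ (by rw [mul_smul, inv_smul_eq_iff]; exact hhh'.symm))
  have hsurj := (hinj.bijective_of_nat_card_le (by omega)).surjective
  intro hgq
  obtain ⟨h, hhp⟩ := hsurj q
  have hgp : (⟨g, hg⟩ : E) • p = p :=
    smul_eq_self_of_mem_orbit (p := q) hgq ⟨h⁻¹, by rw [← hhp]; exact inv_smul_smul h p⟩
  exact hg1 (congrArg Subtype.val (hp _ hgp))

theorem smul_ne_smul_of_free {K E : Subgroup G}
    (hfree : ∀ g ∈ E, g ≠ 1 → ∀ p : Ω, g • p ≠ p) (hKE : K ≤ E) {d : G} (hd : d ∈ E)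
    (hdK : d ∉ K) : ∀ k ∈ K, ∀ p : Ω, d • p ≠ k • p := by
  intro k hk p h
  refine hfree (k⁻¹ * d) (E.mul_mem (E.inv_mem (hKE hk)) hd) (fun h1 => hdK ?_) p ?_
  · rwa [← inv_mul_eq_one.1 h1]
  · rw [mul_smul, h, inv_smul_smul]

variable [FaithfulSMul G Ω]

theorem mul_sq_eq_one_of_card_eq_eight (hΩ : Nat.card Ω = 8)
    (hlarge : ∀ g : G, g ^ 2 = 1 → g ≠ 1 → 4 < {p : Ω | g • p ≠ p}.ncard)
    {K : Subgroup G} (hK : ∀ g ∈ K, g ^ 2 = 1) (hcard : Nat.card K = 4) {a b : G}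
    (ha : a ^ 2 = 1) (hb : b ^ 2 = 1) (haK : a ∉ K) (hbK : b ∉ K)
    (hKa : ∀ g ∈ K, Commute a g) (hKb : ∀ g ∈ K, Commute b g) : (a * b) ^ 2 = 1 := by
  have hcentral {d : G} (hKd : ∀ g ∈ K, Commute d g) : d ∈ Subgroup.centralizer (K : Set G) :=
    fun g hg => (hKd g hg).symm
  have hfree {d : G} (hd : d ^ 2 = 1) (hdK : d ∉ K) (hKd : ∀ g ∈ K, Commute d g) :
      ∀ g ∈ Subgroup.zpowers d ⊔ K, g ≠ 1 → ∀ p : Ω, g • p ≠ p := fun _ =>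
    smul_ne_self_of_card_eq_eight hΩ hlarge (fun _ => sq_eq_one_of_mem_zpowers_sup hK hd hKd)
      (by rw [card_zpowers_sup hd hdK hKd, hcard])
  have hmoved {d : G} (hd : d ^ 2 = 1) (hdK : d ∉ K) (hKd : ∀ g ∈ K, Commute d g) :
      ∀ ω, orbitPermHom Ω K ⟨d, hcentral hKd⟩ ω ≠ ω :=
    orbitPermHom_apply_ne (smul_ne_smul_of_free (hfree hd hdK hKd) le_sup_right
      (Subgroup.mem_sup_left (Subgroup.mem_zpowers d)) hdK)
  have hQ := card_mul_card_orbitRel_quotient fun g hg => hfree ha haK hKa g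
    (Subgroup.mem_sup_right hg)
  rw [hcard, hΩ] at hQ
  have hone := mul_eq_one_of_card_eq_two (by omega) (hmoved ha haK hKa) (hmoved hb hbK hKb)
  exact sq_eq_one_of_orbitPermHom_eq_one hK ((map_mul _ _ _).trans hone)

theorem mul_pow_eight_eq_one_of_card_eq_eight (hΩ : Nat.card Ω = 8) {E K : Subgroup G}
    (hfree : ∀ g ∈ E, g ≠ 1 → ∀ p : Ω, g • p ≠ p) (hKE : K ≤ E) (hK : ∀ g ∈ K, g ^ 2 = 1)
    (hcard : Nat.card K = 2) {a b : G} (ha : a ^ 2 = 1) (hb : b ^ 2 = 1) (haE : a ∈ E)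
    (haK : a ∉ K) (hKa : ∀ g ∈ K, Commute a g) (hKb : ∀ g ∈ K, Commute b g) :
    (a * b) ^ 8 = 1 := by
  let a' : Subgroup.centralizer (K : Set G) := ⟨a, fun g hg => (hKa g hg).symm⟩
  let b' : Subgroup.centralizer (K : Set G) := ⟨b, fun g hg => (hKb g hg).symm⟩
  have ha' : a' ^ 2 = 1 := Subtype.ext ha
  have hb' : b' ^ 2 = 1 := Subtype.ext hb
  have hmoved : ∀ ω, orbitPermHom Ω K a' ω ≠ ω :=
    orbitPermHom_apply_ne (smul_ne_smul_of_free hfree hKE haE haK)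
  have hQ := card_mul_card_orbitRel_quotient fun g hg => hfree g (hKE hg)
  rw [hcard, hΩ] at hQ
  have : Finite (orbitRel.Quotient K Ω) := Nat.finite_of_card_ne_zero (by omega)
  have hone := mul_pow_four_eq_one_of_card_eq_four (by omega)
    (by rw [← map_pow, ha', map_one]) (by rw [← map_pow, hb', map_one] :
      orbitPermHom Ω K b' ^ 2 = 1) hmoved
  rw [← map_mul, ← map_pow] at hone
  have h8 := sq_eq_one_of_orbitPermHom_eq_one hK hone
  rwa [SubmonoidClass.coe_pow, ← pow_mul] at h8

theorem commute_of_klein_four_of_card_eq_eight (hΩ : Nat.card Ω = 8)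
    (hlarge : ∀ g : G, g ^ 2 = 1 → g ≠ 1 → 4 < {p : Ω | g • p ≠ p}.ncard) {a b c u : G}
    (ha : a ^ 2 = 1) (hb : b ^ 2 = 1) (hc : c ^ 2 = 1) (hu : u ^ 2 = 1) (hu1 : u ≠ 1)
    (hcu : c ∉ Subgroup.zpowers u) (huc : Commute c u) (hac : Commute a c) (hau : Commute a u)
    (hbc : Commute b c) (hbu : Commute b u) : Commute a b := by
  have hcomm {d : G} (hdc : Commute d c) (hdu : Commute d u) :
      ∀ g ∈ Subgroup.zpowers c ⊔ Subgroup.zpowers u, Commute d g := fun g hg => by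
    have hle : Subgroup.zpowers c ⊔ Subgroup.zpowers u ≤ Subgroup.centralizer {d} :=
      sup_le (Subgroup.zpowers_le.2 (Subgroup.mem_centralizer_singleton_iff.2 hdc.symm.eq))
        (Subgroup.zpowers_le.2 (Subgroup.mem_centralizer_singleton_iff.2 hdu.symm.eq))
    exact (Subgroup.mem_centralizer_singleton_iff.1 (hle hg)).symm
  have hcomm_u := commute_of_mem_zpowers huc
  by_contra hab
  refine hab ((commute_iff_mul_sq_eq_one ha hb).2 (mul_sq_eq_one_of_card_eq_eight hΩ hlarge
    (fun _ => sq_eq_one_of_mem_zpowers_sup (fun _ => sq_eq_one_of_mem_zpowers hu) hc hcomm_u)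
    ?_ ha hb (fun h => hab (hcomm hbc hbu a h).symm) (fun h => hab (hcomm hac hau b h))
    (hcomm hac hau) (hcomm hbc hbu)))
  rw [card_zpowers_sup hc hcu hcomm_u, card_zpowers_of_sq_eq_one hu hu1]

theorem commute_of_card_eq_eight (hΩ : Nat.card Ω = 8)
    (hlarge : ∀ g : G, g ^ 2 = 1 → g ≠ 1 → 4 < {p : Ω | g • p ≠ p}.ncard) {E : Subgroup G}
    (hE : ∀ g ∈ E, g ^ 2 = 1) (hcard : Nat.card E = 8) {a b c : G} (haE : a ∈ E) (hcE : c ∈ E)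
    (hb : b ^ 2 = 1) (hbc : Commute b c) (hc : c ∉ Subgroup.closure {a, b}) : Commute a b := by
  have ha := hE a haE
  have hc2 := hE c hcE
  have := isMulCommutative_of_sq_eq_one hE
  have hac : Commute a c := setLike_mul_comm haE hcE
  have hcu {u : G} (hu : u ∈ Subgroup.closure {a, b}) : c ∉ Subgroup.zpowers u := fun h =>
    hc (Subgroup.zpowers_le.2 hu h)
  have haC : a ∈ Subgroup.closure {a, b} := Subgroup.subset_closure (Set.mem_insert a _)
  have hbC : b ∈ Subgroup.closure {a, b} := Subgroup.subset_closure (Set.mem_insert_of_mem a rfl)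
  by_contra hab
  have hacz : a ∉ Subgroup.zpowers c := fun h => hab <| by
    rw [Subgroup.disjoint_def.1 (disjoint_zpowers_of_notMem hc2 (hcu haC)) h
      (Subgroup.mem_zpowers a)]
    exact Commute.one_left b
  have h8 : (a * b) ^ 8 = 1 :=
    mul_pow_eight_eq_one_of_card_eq_eight hΩ
      (fun _ => smul_ne_self_of_card_eq_eight hΩ hlarge hE hcard) (Subgroup.zpowers_le.2 hcE)
      (fun _ => sq_eq_one_of_mem_zpowers hc2)
      (card_zpowers_of_sq_eq_one hc2 fun h => hc (h ▸ Subgroup.one_mem _)) ha hb haE hacz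
      (commute_of_mem_zpowers hac) (commute_of_mem_zpowers hbc)
  obtain ⟨n, hn1, hn2⟩ : ∃ n, (a * b) ^ n ≠ 1 ∧ ((a * b) ^ n) ^ 2 = 1 := by
    by_cases h4 : (a * b) ^ 4 = 1
    · exact ⟨2, fun h => hab ((commute_iff_mul_sq_eq_one ha hb).2 h), by rw [← pow_mul, h4]⟩
    · exact ⟨4, h4, by rw [← pow_mul, h8]⟩
  have hau := commute_pow_of_sq_eq_one ha hb hn2
  have hbu : Commute b ((a * b) ^ n) := by
    nth_rw 1 [← inv_mul_cancel_left a b]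
    exact hau.inv_left.mul_left ((Commute.refl (a * b)).pow_right n)
  exact hab (commute_of_klein_four_of_card_eq_eight hΩ hlarge ha hb hc2 hn2 hn1
    (hcu (Subgroup.pow_mem _ (Subgroup.mul_mem _ haC hbC) n))
    ((hac.symm.mul_right hbc.symm).pow_right n) hac hau hbc hbu)

theorem IsIndepString.false_of_card_eq_eight [IsPreprimitive G Ω] {k : ℕ} {β : Fin k → G}
    (hβ : IsIndepString β) (hgen : Subgroup.closure (Set.range β) = ⊤) (hk : 5 ≤ k)
    (hΩ : Nat.card Ω = 8)
    (hlarge : ∀ g : G, g ^ 2 = 1 → g ≠ 1 → 4 < {p : Ω | g • p ≠ p}.ncard) : False := by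
  have : Finite Ω := Nat.finite_of_card_ne_zero (by omega)
  let e : Fin 3 → Fin k := fun s => ⟨2 * s, by omega⟩
  have hsep (s t) : (e s : ℕ) + 1 ≠ e t := by simp only [e]; omega
  obtain ⟨g, hg, hg1, h4⟩ | ⟨-, hcard, -⟩ := hβ.exists_card_moved_le_four_or_exists_free_point
    (Ω := Ω) (e := e) (fun s t h => Fin.ext (by simpa [e] using h)) hsep (by omega) (by simp [hΩ])
  · exact (hlarge g hg hg1).not_ge h4
  have hmem (s) : β (e s) ∈ Subgroup.closure (Set.range (β ∘ e)) :=
    Subgroup.subset_closure ⟨s, rfl⟩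
  refine hβ.not_commute_head hgen (Ω := Ω) (by omega) (by omega) (commute_of_card_eq_eight hΩ hlarge
    (fun _ => hβ.sq_eq_one_of_mem_closure_comp hsep) hcard (hmem 0) (hmem 2) (hβ.sq_eq_one _)
    (hβ.commute _ _ (by simp [e])) fun h => hβ.notMem _ (Subgroup.closure_mono ?_ h))
  rintro _ (rfl | rfl)
  · exact ⟨_, by simp [e], rfl⟩
  · exact ⟨_, by simp [e], rfl⟩

end EightPoints

section NinePoints

open MulAction

variable {G Ω : Type*} [Group G] [MulAction G Ω] {k : ℕ} {β : Fin k → G}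

theorem IsIndepString.exists_forall_smul_eq_self_iff_of_card_eq_nine (hβ : IsIndepString β)
    (hΩ : Nat.card Ω = 9)
    (hlarge : ∀ g : G, g ^ 2 = 1 → g ≠ 1 → 4 < {p : Ω | g • p ≠ p}.ncard) {e : Fin 3 → Fin k}
    (he : Function.Injective e) (hsep : ∀ s t, (e s : ℕ) + 1 ≠ e t) :
    ∃ q : Ω, ∀ s p, β (e s) • p = p ↔ p = q := by
  have : Finite Ω := Nat.finite_of_card_ne_zero (by omega)
  set E := Subgroup.closure (Set.range (β ∘ e))
  have hmem (s) : β (e s) ∈ E := Subgroup.subset_closure ⟨s, rfl⟩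
  obtain ⟨g, hg, hg1, h4⟩ | ⟨-, hcard, p₀, hp₀⟩ :=
    hβ.exists_card_moved_le_four_or_exists_free_point (Ω := Ω) he hsep (by omega) (by simp [hΩ])
  · exact absurd h4 (hlarge g hg hg1).not_ge
  have := isMulCommutative_of_sq_eq_one fun _ => hβ.sq_eq_one_of_mem_closure_comp hsep
  have hstab : stabilizer E p₀ = ⊥ := (Subgroup.eq_bot_iff_forall _).2 fun g hg =>
    Subtype.ext (hp₀ g g.2 hg)
  have horbit : (orbit E p₀).ncard = 8 := by
    rw [← index_stabilizer, hstab, Subgroup.index_bot, hcard]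
  obtain ⟨q, hq⟩ := Set.ncard_eq_one.1 (show (orbit E p₀)ᶜ.ncard = 1 by
    rw [Set.ncard_compl, horbit, hΩ])
  have hmem_orbit {p : Ω} : p ∉ orbit E p₀ ↔ p = q := Set.ext_iff.1 hq p
  refine ⟨q, fun s p => ⟨fun hfix => hmem_orbit.1 fun hp => ?_, ?_⟩⟩
  · have hp₀E := smul_eq_self_of_mem_orbit (g := (⟨_, hmem s⟩ : E)) hfix
      ((orbitRel E Ω).symm hp)
    exact hβ.ne_one _ (hp₀ _ (hmem s) hp₀E)
  · rintro rfl
    refine hmem_orbit.1 fun h => hmem_orbit.2 rfl ?_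
    exact (orbitRel E Ω).trans (mem_orbit_smul (⟨_, hmem s⟩ : E) p) h

theorem IsIndepString.false_of_card_eq_nine [IsPretransitive G Ω] {β : Fin 6 → G}
    (hβ : IsIndepString β) (hgen : Subgroup.closure (Set.range β) = ⊤) (hΩ : Nat.card Ω = 9)
    (hlarge : ∀ g : G, g ^ 2 = 1 → g ≠ 1 → 4 < {p : Ω | g • p ≠ p}.ncard) : False := by
  have htriple (e : Fin 3 → Fin 6) (he : Function.Injective e)
      (hsep : ∀ s t, (e s : ℕ) + 1 ≠ e t) : ∃ q : Ω, ∀ s p, β (e s) • p = p ↔ p = q :=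
    hβ.exists_forall_smul_eq_self_iff_of_card_eq_nine hΩ hlarge he hsep
  obtain ⟨q, h024⟩ := htriple ![0, 2, 4] (by decide) (by decide)
  obtain ⟨q₁, h025⟩ := htriple ![0, 2, 5] (by decide) (by decide)
  obtain ⟨q₂, h035⟩ := htriple ![0, 3, 5] (by decide) (by decide)
  obtain ⟨q₃, h135⟩ := htriple ![1, 3, 5] (by decide) (by decide)
  obtain rfl : q = q₁ := (h025 0 q).1 ((h024 0 q).2 rfl)
  obtain rfl : q = q₂ := (h035 0 q).1 ((h025 0 q).2 rfl)
  obtain rfl : q = q₃ := (h135 1 q).1 ((h035 1 q).2 rfl)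
  have hfix : ∀ i, β i • q = q := by
    intro i
    fin_cases i
    exacts [(h024 0 q).2 rfl, (h135 0 q).2 rfl, (h024 1 q).2 rfl, (h135 1 q).2 rfl,
      (h024 2 q).2 rfl, (h135 2 q).2 rfl]
  have hstab : stabilizer G q = ⊤ := top_le_iff.1 <| by
    rw [← hgen, Subgroup.closure_le]
    rintro _ ⟨i, rfl⟩
    exact hfix i
  have : Subsingleton Ω := ⟨fun p p' => by
    obtain ⟨g, rfl⟩ := exists_smul_eq G q p
    obtain ⟨g', rfl⟩ := exists_smul_eq G q p'
    rw [mem_stabilizer_iff.1 (hstab.ge (Subgroup.mem_top g)),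
      mem_stabilizer_iff.1 (hstab.ge (Subgroup.mem_top g'))]⟩
  rw [Nat.card_of_subsingleton q] at hΩ
  omega

end NinePoints

section Permutations

variable {Ω : Type*}

theorem apply_apply_of_sq_eq_one {t : Equiv.Perm Ω} (ht : t ^ 2 = 1) (x : Ω) : t (t x) = x := by
  rw [← mul_apply, ← pow_two, ht, one_apply]

variable [Fintype Ω] [DecidableEq Ω]

theorem sign_of_sq_eq_one {t : Equiv.Perm Ω} (ht : t ^ 2 = 1) :
    sign t = (-1) ^ (t.support.card / 2) := by
  rw [sign_of_pow_two_eq_one ht, card_fixedPoints, Nat.sub_sub_self t.sum_cycleType_le,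
    sum_cycleType]

theorem isCycle_of_card_support_eq_five {g : Equiv.Perm Ω} (h5 : g.support.card = 5)
    (hg : sign g = 1) : g.IsCycle := by
  rw [sign_of_cycleType, sum_cycleType, h5] at hg
  have h2 := Multiset.card_nsmul_le_sum fun x hx => two_le_of_mem_cycleType (σ := g) hx
  rw [sum_cycleType, h5, smul_eq_mul] at h2
  rw [← card_cycleType_eq_one]
  have hle : g.cycleType.card ≤ 2 := by omega
  interval_cases g.cycleType.card
  · exact absurd hg (by decide)
  · rfl
  · exact absurd hg (by decide)

theorem support_commutator_subset_of_support_inter_eq_singleton {s t : Equiv.Perm Ω} {a : Ω}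
    (hs : s ^ 2 = 1) (ht : t ^ 2 = 1) (h : t.support ∩ s.support = {a}) :
    (s * t * s * t).support ⊆ {a, s a, t a} := by
  have hss := apply_apply_of_sq_eq_one hs
  have htt := apply_apply_of_sq_eq_one ht
  have hunique (x) (h1 : t x ≠ x) (h2 : s x ≠ x) : x = a := by
    simpa [h] using show x ∈ t.support ∩ s.support by simp [h1, h2]
  intro x
  simp only [mem_support, mul_apply, Finset.mem_insert, Finset.mem_singleton]
  by_cases htx : t x = x
  · have hsx : x ≠ s a → t (s x) = s x := fun hne => by
      by_contra h
      exact hne (by rw [← hunique (s x) h fun h' => h (by grind), hss])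
    grind
  · have hstx : x ≠ t a → s (t x) = t x := fun hne => by
      by_contra h
      exact hne (by rw [← hunique (t x) (fun h' => htx (by rw [← h', htt])) h, htt])
    grind

open scoped Pointwise in
theorem exists_smul_eq_of_isCycle {H : Subgroup (Equiv.Perm Ω)}
    (hH : MulAction.IsPreprimitive H Ω) {c : Equiv.Perm Ω} (hc : c ∈ H) (hcyc : c.IsCycle)
    (hprime : c.support.card.Prime) (hlt : c.support.card < Fintype.card Ω) {A B : Finset Ω}
    (hA : A.card + 1 = c.support.card) (hB : B.card + 1 = c.support.card) :
    ∃ h ∈ H, h • A = B := by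
  have hcard : Nat.card Ω = Fintype.card Ω := Nat.card_eq_fintype_card
  have htrans := isPretransitive_of_isCycle_mem hcyc hc
  have hprim : MulAction.IsPreprimitive (fixingSubgroup H (c.support : Set Ω)ᶜ)
      (SubMulAction.ofFixingSubgroup H (c.support : Set Ω)ᶜ) := by
    apply MulAction.IsPreprimitive.of_prime_card
    have hncard := (congrArg Set.ncard (compl_compl (c.support : Set Ω))).trans
      (Set.ncard_coe_finset _)
    exact (hncard ▸ hprime : ((c.support : Set Ω)ᶜᶜ).ncard.Prime)
  have hmult := (hH.isMultiplyPreprimitive (s := (c.support : Set Ω)ᶜ)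
    (n := Fintype.card Ω - c.support.card - 1) (by
      rw [Set.ncard_compl, Set.ncard_coe_finset, hcard]
      omega) (by have := hprime.two_le; omega) hprim).isMultiplyPretransitive
  have hset := Set.powersetCard.isPretransitive_of_isMultiplyPretransitive H hmult
  have hcompl {D : Finset Ω} (hD : D.card + 1 = c.support.card) :
      Dᶜ ∈ Set.powersetCard Ω (Fintype.card Ω - c.support.card - 1 + 2) := by
    rw [Set.powersetCard.mem_iff, Finset.card_compl]
    omega
  obtain ⟨⟨h, hh⟩, hAB⟩ := hset.exists_smul_eq ⟨Aᶜ, hcompl hA⟩ ⟨Bᶜ, hcompl hB⟩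
  refine ⟨h, hh, compl_injective (Eq.trans ?_ (congrArg Subtype.val hAB))⟩
  rw [Set.powersetCard.coe_smul]
  ext x
  simp [← Finset.inv_smul_mem_iff]

end Permutations

section Tetrads

variable {Ω : Type*} [Fintype Ω] [DecidableEq Ω]

/-- A tetrad of a permutation group: a four-element set which is the support of an involution of
the group. -/
def IsTetrad (H : Subgroup (Equiv.Perm Ω)) (A : Finset Ω) : Prop :=
  A.card = 4 ∧ ∃ t ∈ H, t ^ 2 = 1 ∧ t.support = A

variable {H : Subgroup (Equiv.Perm Ω)} {A B : Finset Ω}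

open scoped Pointwise in
theorem IsTetrad.smul (hA : IsTetrad H A) {h : Equiv.Perm Ω} (hh : h ∈ H) : IsTetrad H (h • A) := by
  obtain ⟨h4, t, ht, ht2, rfl⟩ := hA
  refine ⟨by rw [Finset.card_smul_finset, h4], h * t * h⁻¹,
    H.mul_mem (H.mul_mem hh ht) (H.inv_mem hh), ?_, ?_⟩
  · rw [conj_pow, ht2, mul_one, mul_inv_cancel]
  · rw [support_conj, Finset.map_eq_image]
    rfl

theorem IsTetrad.card_inter_ne_one (hsmall : ∀ g ∈ H, g.support.card ≤ 3 → g = 1)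
    (hA : IsTetrad H A) (hB : IsTetrad H B) : (A ∩ B).card ≠ 1 := by
  intro h1
  obtain ⟨-, t, ht, ht2, rfl⟩ := hA
  obtain ⟨-, s, hs, hs2, rfl⟩ := hB
  obtain ⟨a, ha⟩ := Finset.card_eq_one.1 h1
  have hone : s * t * s * t = 1 := hsmall _ (H.mul_mem (H.mul_mem (H.mul_mem hs ht) hs) ht) <|
    (Finset.card_le_card (support_commutator_subset_of_support_inter_eq_singleton hs2 ht2 ha)).trans
      Finset.card_le_three
  have hcomm : Commute s t :=
    (commute_iff_mul_sq_eq_one hs2 ht2).2 (by rwa [pow_two, ← mul_assoc])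
  have hmem : a ∈ t.support ∩ s.support := ha ▸ Finset.mem_singleton_self a
  rw [Finset.mem_inter, mem_support, mem_support] at hmem
  have hta : t a ∉ s.support := fun h => hmem.1 <| Finset.mem_singleton.1 <|
    ha ▸ Finset.mem_inter.2 ⟨apply_mem_support.2 (mem_support.2 hmem.1), h⟩
  have hst : t (s a) = t a :=
    (congrArg (fun f : Equiv.Perm Ω => f a) hcomm.eq).symm.trans (notMem_support.1 hta)
  exact hmem.2 (t.injective hst)

theorem support_mul_eq_union_of_card_inter_eq_three (hsmall : ∀ g ∈ H, g.support.card ≤ 3 → g = 1)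
    {s t : Equiv.Perm Ω} (hs : s ∈ H) (ht : t ∈ H) (hs2 : s ^ 2 = 1) (ht2 : t ^ 2 = 1)
    (hs4 : s.support.card = 4) (ht4 : t.support.card = 4)
    (h3 : (t.support ∩ s.support).card = 3) : (s * t).support = t.support ∪ s.support := by
  have hss := apply_apply_of_sq_eq_one hs2
  have htt := apply_apply_of_sq_eq_one ht2
  have hcard := Finset.card_union_add_card_inter t.support s.support
  have hsubset : (s * t).support ⊆ t.support ∪ s.support :=
    (support_mul_le s t).trans (sup_comm _ _).le
  refine hsubset.antisymm fun y hy => ?_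
  by_contra hfix
  rw [notMem_support, mul_apply] at hfix
  have hty : t y = s y := by rw [← hss (t y), hfix]
  have hyt : t y ≠ y := by
    rcases Finset.mem_union.1 hy with h | h
    · exact mem_support.1 h
    · exact hty ▸ mem_support.1 h
  have hsub : (s * t).support ⊆ (t.support ∪ s.support) \ {y, t y} := by
    intro z hz
    rw [Finset.mem_sdiff, Finset.mem_insert, Finset.mem_singleton]
    refine ⟨hsubset hz, ?_⟩
    rw [mem_support, mul_apply] at hz
    rintro (rfl | rfl)
    · exact hz hfix
    · exact hz (by rw [htt, hty])
  have hpair : {y, t y} ⊆ t.support ∪ s.support := Finset.insert_subset hy <|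
    Finset.singleton_subset_iff.2 <| Finset.mem_union_left _ <|
      apply_mem_support.2 (mem_support.2 hyt)
  have hle := Finset.card_le_card hsub
  rw [Finset.card_sdiff_of_subset hpair, Finset.card_pair hyt.symm] at hle
  have hst : s = t := mul_left_cancel <| (pow_two s ▸ hs2 : s * s = 1).trans
    (hsmall _ (H.mul_mem hs ht) (by omega)).symm
  rw [hst, Finset.inter_self] at h3
  omega

theorem IsTetrad.card_inter_ne_three (hH : MulAction.IsPreprimitive H Ω)
    (hΩ : 7 ≤ Fintype.card Ω) (hsmall : ∀ g ∈ H, g.support.card ≤ 3 → g = 1)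
    (hA : IsTetrad H A) (hB : IsTetrad H B) : (A ∩ B).card ≠ 3 := by
  intro h3
  have hA' := hA
  obtain ⟨hA4, t, ht, ht2, rfl⟩ := hA
  obtain ⟨hB4, s, hs, hs2, rfl⟩ := hB
  have hsupp := support_mul_eq_union_of_card_inter_eq_three hsmall hs ht hs2 ht2 hB4 hA4 h3
  have h5 : (s * t).support.card = 5 := by
    have := Finset.card_union_add_card_inter t.support s.support
    rw [hsupp]
    omega
  have hcyc := isCycle_of_card_support_eq_five h5 (by
    rw [map_mul, sign_of_sq_eq_one hs2, sign_of_sq_eq_one ht2, hA4, hB4]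
    rfl)
  obtain ⟨d, hd⟩ : t.support.Nonempty := Finset.card_pos.1 (by omega)
  obtain ⟨X, hX, hX3⟩ := Finset.exists_subset_card_eq (s := t.supportᶜ) (n := 3)
    (by rw [Finset.card_compl]; omega)
  have hdX : d ∉ X := fun h => Finset.mem_compl.1 (hX h) hd
  obtain ⟨h, hh, hmap⟩ := exists_smul_eq_of_isCycle hH (H.mul_mem hs ht) hcyc
    (h5 ▸ Nat.prime_five) (by omega) (A := t.support) (B := insert d X) (by omega)
    (by rw [Finset.card_insert_of_notMem hdX]; omega)
  refine IsTetrad.card_inter_ne_one hsmall hA' (hA'.smul hh) ?_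
  rw [hmap, Finset.inter_insert_of_mem hd, Finset.disjoint_iff_inter_eq_empty.1 <|
    Finset.disjoint_right.2 fun x hx => Finset.mem_compl.1 (hX hx)]
  rfl

theorem IsTetrad.even_card_inter (hH : MulAction.IsPreprimitive H Ω)
    (hΩ : 7 ≤ Fintype.card Ω) (hsmall : ∀ g ∈ H, g.support.card ≤ 3 → g = 1)
    (hA : IsTetrad H A) (hB : IsTetrad H B) : Even (A ∩ B).card := by
  have h1 := hA.card_inter_ne_one hsmall hB
  have h3 := hA.card_inter_ne_three hH hΩ hsmall hB
  have h4 := Finset.card_le_card (Finset.inter_subset_left (s₁ := A) (s₂ := B))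
  rw [hA.1] at h4
  interval_cases (A ∩ B).card
  exacts [by decide, absurd rfl h1, by decide, absurd rfl h3, by decide]

end Tetrads

section Cube

/-- The elementary abelian group of order eight, the ambient space of the affine structure which
the tetrads put on a primitive set. -/
abbrev Cube : Type := ZMod 2 × ZMod 2 × ZMod 2

/-- The standard bilinear form on the cube. -/
def cubeDot (f w : Cube) : ZMod 2 := f.1 * w.1 + f.2.1 * w.2.1 + f.2.2 * w.2.2

theorem cubeDot_add (f w w' : Cube) : cubeDot f (w + w') = cubeDot f w + cubeDot f w' := by
  simp only [cubeDot, Prod.fst_add, Prod.snd_add]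
  ring

set_option synthInstance.maxSize 1000 in
theorem exists_cubeDot_add_eq_one_iff : ∀ I : Finset Cube, I.card = 4 → ∑ x ∈ I, x = 0 →
    ∃ f : Cube, ∃ c : ZMod 2, ∀ w, w ∈ I ↔ cubeDot f w + c = 1 := by
  decide +kernel

theorem odd_card_inter_of_card_eq_three : ∀ I : Finset Cube,
    0 ∉ I ∧ I.card = 3 ∧ ∑ x ∈ I, x = 0 → ∀ J : Finset Cube,
      0 ∉ J ∧ J.card = 3 ∧ ∑ x ∈ J, x = 0 → Odd (I ∩ J).card := by
  decide +kernel

theorem card_eq_zero_or_three_le : ∀ I : Finset Cube, 0 ∉ I → ∑ x ∈ I, x = 0 →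
    I.card = 0 ∨ 3 ≤ I.card := by
  decide +kernel

end Cube

section Labels

variable {Ω : Type*}

/-- The nonzero labels occurring in a set. -/
def nonzeroLabels (l : Ω → Cube) (D : Finset Ω) : Finset Cube :=
  {x ∈ D | l x ≠ 0}.image l

variable {l : Ω → Cube} {D : Finset Ω}

theorem zero_notMem_nonzeroLabels : 0 ∉ nonzeroLabels l D := by
  simp only [nonzeroLabels, Finset.mem_image, Finset.mem_filter, not_exists, not_and]
  exact fun x hx => hx.2

theorem card_nonzeroLabels (hl : Set.InjOn l {x | l x ≠ 0}) :
    (nonzeroLabels l D).card = {x ∈ D | l x ≠ 0}.card :=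
  Finset.card_image_of_injOn <| hl.mono fun _ hx => (Finset.mem_filter.1 hx).2

theorem sum_nonzeroLabels (hl : Set.InjOn l {x | l x ≠ 0}) :
    ∑ w ∈ nonzeroLabels l D, w = ∑ x ∈ D, l x := by
  rw [nonzeroLabels, Finset.sum_image, Finset.sum_filter_ne_zero]
  exact hl.mono fun _ hx => (Finset.mem_filter.1 hx).2

theorem card_nonzeroLabels_eq_three (hl : Set.InjOn l {x | l x ≠ 0}) (hD : D.card = 4)
    (hsum : ∑ x ∈ D, l x = 0) {x y : Ω} (hx : x ∈ D) (hlx : l x = 0) (hy : y ∈ D)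
    (hly : l y ≠ 0) : (nonzeroLabels l D).card = 3 := by
  have hcases := card_eq_zero_or_three_le _ zero_notMem_nonzeroLabels
    ((sum_nonzeroLabels hl).trans hsum)
  have hcount := Finset.card_filter_add_card_filter_not (s := D) (fun x => l x ≠ 0)
  simp only [not_not] at hcount
  have hzero : 0 < {x ∈ D | l x = 0}.card := Finset.card_pos.2 ⟨x, by simp [hx, hlx]⟩
  have hnonzero : 0 < {x ∈ D | l x ≠ 0}.card := Finset.card_pos.2 ⟨y, by simp [hy, hly]⟩
  rw [card_nonzeroLabels hl] at hcases ⊢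
  omega

theorem eq_of_label_eq_zero_of_mem (hl : Set.InjOn l {x | l x ≠ 0}) (hD : D.card = 4)
    (hsum : ∑ x ∈ D, l x = 0) (hD0 : ∃ z ∈ D, l z ≠ 0) {x y : Ω} (hx : x ∈ D) (hlx : l x = 0)
    (hy : y ∈ D) (hly : l y = 0) : x = y := by
  obtain ⟨z, hz, hlz⟩ := hD0
  have hthree := card_nonzeroLabels_eq_three hl hD hsum hx hlx hz hlz
  have hcount := Finset.card_filter_add_card_filter_not (s := D) (fun x => l x ≠ 0)
  simp only [not_not] at hcount
  rw [card_nonzeroLabels hl] at hthree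
  have hle : {x ∈ D | l x = 0}.card ≤ 1 := by omega
  exact Finset.card_le_one.1 hle x (Finset.mem_filter.2 ⟨hx, hlx⟩) y
    (Finset.mem_filter.2 ⟨hy, hly⟩)

variable [DecidableEq Ω]

theorem nonzeroLabels_inter {D' : Finset Ω} (hl : Set.InjOn l {x | l x ≠ 0}) :
    nonzeroLabels l (D ∩ D') = nonzeroLabels l D ∩ nonzeroLabels l D' := by
  rw [nonzeroLabels, Finset.filter_inter_distrib, Finset.image_inter_of_injOn]
  · rfl
  · exact hl.mono fun x hx => by
      rcases hx with hx | hx <;> exact (Finset.mem_filter.1 hx).2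

-- The nonzero labels of `D` and of `D'` are lines of the Fano plane, which meet in an odd number
-- of points.
theorem exists_mem_inter_label_eq_zero {D' : Finset Ω} (hl : Set.InjOn l {x | l x ≠ 0})
    (hD : (nonzeroLabels l D).card = 3) (hD' : (nonzeroLabels l D').card = 3)
    (hsum : ∑ x ∈ D, l x = 0) (hsum' : ∑ x ∈ D', l x = 0) (heven : Even (D ∩ D').card) :
    ∃ x ∈ D ∩ D', l x = 0 := by
  have hodd := odd_card_inter_of_card_eq_three _
    ⟨zero_notMem_nonzeroLabels, hD, (sum_nonzeroLabels hl).trans hsum⟩ _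
    ⟨zero_notMem_nonzeroLabels, hD', (sum_nonzeroLabels hl).trans hsum'⟩
  rw [← nonzeroLabels_inter hl, card_nonzeroLabels hl] at hodd
  by_contra! hcon
  rw [Finset.filter_true_of_mem hcon] at hodd
  exact Nat.not_even_iff_odd.2 hodd heven

/-- The membership vector of a point with respect to three sets. -/
def cubeLabel (A B C : Finset Ω) (p : Ω) : Cube :=
  (if p ∈ A then 1 else 0, if p ∈ B then 1 else 0, if p ∈ C then 1 else 0)

theorem existsUnique_cubeLabel_eq {A B C : Finset Ω} (hA : A.card = 4) (hB : B.card = 4)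
    (hC : C.card = 4) (hAB : (A ∩ B).card = 2) (hAC : (A ∩ C).card = 2) (hBC : (B ∩ C).card = 2)
    (hABC : (A ∩ B ∩ C).card = 1) (w : Cube) (hw : w ≠ 0) : ∃! p, cubeLabel A B C p = w := by
  suffices h : ∃ X : Finset Ω, X.card = 1 ∧ ∀ p, p ∈ X ↔ cubeLabel A B C p = w by
    obtain ⟨X, hX, hmem⟩ := h
    obtain ⟨p, rfl⟩ := Finset.card_eq_one.1 hX
    exact ⟨p, (hmem p).1 (Finset.mem_singleton_self p),
      fun q hq => Finset.mem_singleton.1 ((hmem q).2 hq)⟩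
  have e1 := Finset.card_sdiff_add_card_inter (A ∩ B) C
  have e2 := Finset.card_sdiff_add_card_inter (A ∩ C) B
  have e3 := Finset.card_sdiff_add_card_inter (B ∩ C) A
  have e4 := Finset.card_sdiff_add_card_inter A B
  have e5 := Finset.card_sdiff_add_card_inter B A
  have e6 := Finset.card_sdiff_add_card_inter C A
  have e7 := Finset.card_sdiff_add_card_inter (A \ B) C
  have e8 := Finset.card_sdiff_add_card_inter (B \ A) C
  have e9 := Finset.card_sdiff_add_card_inter (C \ A) B
  rw [show A ∩ C ∩ B = A ∩ B ∩ C by grind] at e2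
  rw [show B ∩ C ∩ A = A ∩ B ∩ C by grind] at e3
  rw [Finset.inter_comm] at e5 e6
  rw [show (A \ B) ∩ C = (A ∩ C) \ B by grind] at e7
  rw [show (B \ A) ∩ C = (B ∩ C) \ A by grind] at e8
  rw [show (C \ A) ∩ B = (B ∩ C) \ A by grind] at e9
  have h01 : ∀ c : ZMod 2, c = 0 ∨ c = 1 := by decide
  obtain ⟨a, b, c⟩ := w
  rcases h01 a with rfl | rfl <;> rcases h01 b with rfl | rfl <;> rcases h01 c with rfl | rfl
  · exact absurd rfl hw
  · exact ⟨(C \ A) \ B, by omega, fun p => by grind [cubeLabel]⟩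
  · exact ⟨(B \ A) \ C, by omega, fun p => by grind [cubeLabel]⟩
  · exact ⟨(B ∩ C) \ A, by omega, fun p => by grind [cubeLabel]⟩
  · exact ⟨(A \ B) \ C, by omega, fun p => by grind [cubeLabel]⟩
  · exact ⟨(A ∩ C) \ B, by omega, fun p => by grind [cubeLabel]⟩
  · exact ⟨(A ∩ B) \ C, by omega, fun p => by grind [cubeLabel]⟩
  · exact ⟨A ∩ B ∩ C, by omega, fun p => by simp [cubeLabel]⟩

theorem sum_cubeLabel_eq_zero {A B C D : Finset Ω} (hA : Even (D ∩ A).card)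
    (hB : Even (D ∩ B).card) (hC : Even (D ∩ C).card) : ∑ x ∈ D, cubeLabel A B C x = 0 := by
  have hsum (X : Finset Ω) (hX : Even (D ∩ X).card) :
      ∑ x ∈ D, (if x ∈ X then (1 : ZMod 2) else 0) = 0 := by
    rw [Finset.sum_ite_mem, Finset.sum_const, nsmul_one]
    exact ZMod.natCast_eq_zero_iff_even.2 hX
  ext <;> simp only [cubeLabel, Prod.fst_sum, Prod.snd_sum]
  exacts [hsum A hA, hsum B hB, hsum C hC]

end Labels

section SeparatingTetrads

variable {Ω : Type*} [Fintype Ω] [DecidableEq Ω] {H : Subgroup (Equiv.Perm Ω)} {A B : Finset Ω}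

open scoped Pointwise in
theorem exists_isTetrad_separating (hH : MulAction.IsPreprimitive H Ω)
    (hΩ : 4 < Fintype.card Ω) (hA : IsTetrad H A) {p q : Ω} (hpq : p ≠ q) :
    ∃ B, IsTetrad H B ∧ ¬(p ∈ B ↔ q ∈ B) := by
  let s : Setoid Ω :=
    { r := fun p q => ∀ B, IsTetrad H B → (p ∈ B ↔ q ∈ B)
      iseqv := ⟨fun _ _ _ => Iff.rfl, fun h B hB => (h B hB).symm,
        fun h h' B hB => (h B hB).trans (h' B hB)⟩ }
  by_contra! hcon
  rcases eq_bot_or_eq_top_of_invariant_setoid s (G := H) fun g {p q} hpq B hB =>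
    Finset.mem_inv_smul_finset_iff.symm.trans <|
      (hpq _ (hB.smul (H.inv_mem g.2))).trans Finset.mem_inv_smul_finset_iff with hs | hs
  · exact hpq (show (⊥ : Setoid Ω) p q from hs ▸ hcon)
  · obtain ⟨x, hx⟩ : A.Nonempty := Finset.card_pos.1 (by rw [hA.1]; norm_num)
    have huniv : A = Finset.univ := Finset.eq_univ_of_forall fun y =>
      ((hs ▸ trivial : s x y) A hA).1 hx
    rw [← Finset.card_univ, ← huniv, hA.1] at hΩ
    omega

open scoped Pointwise in
theorem exists_isTetrad_crossing (hH : MulAction.IsPreprimitive H Ω) (hA : IsTetrad H A)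
    (V : Finset Ω) {v w : Ω} (hv : v ∈ V) (hw : w ∉ V) :
    ∃ B, IsTetrad H B ∧ (∃ x ∈ B, x ∈ V) ∧ ∃ y ∈ B, y ∉ V := by
  let s : Setoid Ω :=
    { r := fun p q => ∀ h : H, h • p ∈ V ↔ h • q ∈ V
      iseqv := ⟨fun _ _ => Iff.rfl, fun h g => (h g).symm, fun h h' g => (h g).trans (h' g)⟩ }
  by_contra! hcon
  rcases eq_bot_or_eq_top_of_invariant_setoid s (G := H) fun g {p q} hpq h => by
    simpa only [mul_smul] using hpq (h * g) with hs | hs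
  · obtain ⟨x, y, hx, hy, hxy⟩ := Finset.one_lt_card_iff.1 (by rw [hA.1]; norm_num : 1 < A.card)
    have hmem {z : Ω} (hz : z ∈ A) (g : H) : g • z ∈ (g : Equiv.Perm Ω) • A :=
      Finset.smul_mem_smul_finset hz
    refine hxy (show (⊥ : Setoid Ω) x y from hs ▸ fun g => ?_)
    exact ⟨fun h => hcon _ (hA.smul g.2) ⟨_, hmem hx g, h⟩ _ (hmem hy g),
      fun h => hcon _ (hA.smul g.2) ⟨_, hmem hy g, h⟩ _ (hmem hx g)⟩
  · exact hw (by simpa using ((hs ▸ trivial : s v w) 1).1 (by simpa using hv))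

theorem IsTetrad.card_inter_eq_two (hH : MulAction.IsPreprimitive H Ω)
    (hΩ : 7 ≤ Fintype.card Ω) (hsmall : ∀ g ∈ H, g.support.card ≤ 3 → g = 1)
    (hA : IsTetrad H A) (hB : IsTetrad H B) {p q : Ω} (hp : p ∈ A) (hq : q ∈ A)
    (hpq : ¬(p ∈ B ↔ q ∈ B)) : (A ∩ B).card = 2 := by
  obtain ⟨c, hc⟩ := hA.even_card_inter hH hΩ hsmall hB
  have h0 : 0 < (A ∩ B).card := by
    rw [Finset.card_pos]
    by_cases h : p ∈ B
    · exact ⟨p, Finset.mem_inter.2 ⟨hp, h⟩⟩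
    · exact ⟨q, Finset.mem_inter.2 ⟨hq, by tauto⟩⟩
  have h4 : (A ∩ B).card < A.card := Finset.card_lt_card
    ⟨Finset.inter_subset_left, fun h => hpq (iff_of_true (Finset.mem_inter.1 (h hp)).2
      (Finset.mem_inter.1 (h hq)).2)⟩
  rw [hA.1] at h4
  omega

theorem exists_three_isTetrad (hH : MulAction.IsPreprimitive H Ω)
    (hΩ : 7 ≤ Fintype.card Ω) (hsmall : ∀ g ∈ H, g.support.card ≤ 3 → g = 1)
    (hA : IsTetrad H A) : ∃ B C, IsTetrad H B ∧ IsTetrad H C ∧ (A ∩ B).card = 2 ∧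
      (A ∩ C).card = 2 ∧ (B ∩ C).card = 2 ∧ (A ∩ B ∩ C).card = 1 := by
  obtain ⟨x, y, hx, hy, hxy⟩ := Finset.one_lt_card_iff.1 (by rw [hA.1]; norm_num : 1 < A.card)
  obtain ⟨B, hB, hBxy⟩ := exists_isTetrad_separating hH (by omega) hA hxy
  have hAB := hA.card_inter_eq_two hH hΩ hsmall hB hx hy hBxy
  obtain ⟨p, q, hpq, hpair⟩ := Finset.card_eq_two.1 hAB
  have hp : p ∈ A ∩ B := by simp [hpair]
  have hq : q ∈ A ∩ B := by simp [hpair]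
  rw [Finset.mem_inter] at hp hq
  obtain ⟨C, hC, hCpq⟩ := exists_isTetrad_separating hH (by omega) hA hpq
  refine ⟨B, C, hB, hC, hAB, hA.card_inter_eq_two hH hΩ hsmall hC hp.1 hq.1 hCpq,
    hB.card_inter_eq_two hH hΩ hsmall hC hp.2 hq.2 hCpq, ?_⟩
  rw [hpair]
  by_cases h : p ∈ C
  · rw [Finset.insert_inter_of_mem h, Finset.singleton_inter_of_notMem (by tauto)]
    rfl
  · rw [Finset.insert_inter_of_notMem h, Finset.singleton_inter_of_mem (by tauto)]
    rfl

theorem eq_of_label_eq_zero (hH : MulAction.IsPreprimitive H Ω) (hΩ : 7 ≤ Fintype.card Ω)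
    (hsmall : ∀ g ∈ H, g.support.card ≤ 3 → g = 1) (hA : IsTetrad H A) {l : Ω → Cube}
    (hl : Set.InjOn l {x | l x ≠ 0}) (hne : ∃ x, l x ≠ 0)
    (hsum : ∀ D, IsTetrad H D → ∑ x ∈ D, l x = 0) {p q : Ω} (hp : l p = 0) (hq : l q = 0) :
    p = q := by
  by_contra hpq
  obtain ⟨v, hv⟩ := hne
  obtain ⟨D, hD, ⟨x, hxD, hx⟩, y, hyD, hy⟩ := exists_isTetrad_crossing hH hA
    {x | l x ≠ 0} (v := v) (w := p) (by simpa using hv) (by simpa using hp)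
  replace hx : l x ≠ 0 := by simpa using hx
  replace hy : l y = 0 := by simpa using hy
  have hunique {z : Ω} : z ∈ D → l z = 0 → z = y := fun hz hlz =>
    eq_of_label_eq_zero_of_mem hl hD.1 (hsum D hD) ⟨x, hxD, hx⟩ hz hlz hyD hy
  obtain ⟨w, hwy, hw⟩ : ∃ w, w ≠ y ∧ l w = 0 := by
    by_cases h : p = y
    · exact ⟨q, fun h' => hpq (h.trans h'.symm), hq⟩
    · exact ⟨p, h, hp⟩
  obtain ⟨E, hE, ⟨z, hzE, hz⟩, u, huE, hu⟩ := exists_isTetrad_crossing hH hA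
    {x | l x ≠ 0 ∨ x = y} (v := v) (w := w) (by simp [hv]) (by simp [hw, hwy])
  replace hz : l z ≠ 0 ∨ z = y := by simpa using hz
  replace hu : l u = 0 ∧ u ≠ y := by simpa using hu
  by_cases hE0 : ∃ x ∈ E, l x ≠ 0
  · obtain ⟨x', hx'E, hx'⟩ := hE0
    obtain ⟨t, ht, hlt⟩ := exists_mem_inter_label_eq_zero hl
      (card_nonzeroLabels_eq_three hl hD.1 (hsum D hD) hyD hy hxD hx)
      (card_nonzeroLabels_eq_three hl hE.1 (hsum E hE) huE hu.1 hx'E hx') (hsum D hD) (hsum E hE)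
      (hD.even_card_inter hH hΩ hsmall hE)
    rw [Finset.mem_inter] at ht
    have htu := eq_of_label_eq_zero_of_mem hl hE.1 (hsum E hE) ⟨x', hx'E, hx'⟩ ht.2 hlt huE hu.1
    exact hu.2 (htu ▸ hunique ht.1 hlt)
  · push Not at hE0
    obtain rfl : z = y := hz.resolve_left (not_not.2 (hE0 z hzE))
    refine hD.card_inter_ne_one hsmall hE <| Finset.card_eq_one.2 ⟨z,
      Finset.eq_singleton_iff_unique_mem.2 ⟨Finset.mem_inter.2 ⟨hyD, hzE⟩, fun t ht => ?_⟩⟩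
    rw [Finset.mem_inter] at ht
    exact hunique ht.1 (hE0 t ht.2)

end SeparatingTetrads

section Centralizer

theorem add_mem_of_relIndex_eq_two {V : Type*} [AddGroup V] {A B : AddSubgroup V}
    (hAB : A.relIndex B = 2) {a b : V} (ha : a ∈ B) (hb : b ∈ B) (hab : a ∈ A ↔ b ∈ A) :
    a + b ∈ A :=
  (AddSubgroup.add_mem_iff_of_index_two hAB (a := ⟨a, ha⟩) (b := ⟨b, hb⟩)).2 hab

theorem card_range_eq_two_and_card_ker_eq_four {n : Cube →+ Cube} (hn : n.range ≤ n.ker)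
    (hn0 : n ≠ 0) : Nat.card n.range = 2 ∧ Nat.card n.ker = 4 := by
  have hcard : Nat.card n.range * Nat.card n.ker = 8 := by
    rw [mul_comm, ← AddSubgroup.index_ker, AddSubgroup.card_mul_index]
    simp [Cube]
  have hle : Nat.card n.range ≤ Nat.card n.ker := AddSubgroup.card_le_of_le hn
  have hne : Nat.card n.range ≠ 1 := fun h =>
    hn0 (AddMonoidHom.range_eq_bot_iff.1 (AddSubgroup.card_eq_one.1 h))
  have hlt : Nat.card n.range < 3 := by
    by_contra! h
    nlinarith
  interval_cases Nat.card n.range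
  · omega
  · exact absurd rfl hne
  · exact ⟨rfl, by omega⟩

theorem relIndex_flag_eq_two {n : Cube →+ Cube} (hn : n.range ≤ n.ker) (hn0 : n ≠ 0) :
    (⊥ : AddSubgroup Cube).relIndex n.range = 2 ∧ n.range.relIndex n.ker = 2 ∧
      n.ker.relIndex ⊤ = 2 := by
  obtain ⟨hrange, hker⟩ := card_range_eq_two_and_card_ker_eq_four hn hn0
  have hmul := AddSubgroup.card_mul_index (n.range.addSubgroupOf n.ker)
  rw [Nat.card_congr (AddSubgroup.addSubgroupOfEquivOfLe hn).toEquiv, hrange, hker] at hmul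
  exact ⟨by rw [AddSubgroup.relIndex_bot_left, hrange], by rw [AddSubgroup.relIndex]; omega,
    by rw [AddSubgroup.relIndex_top_right, AddSubgroup.index_ker, hrange]⟩

-- With `n = c + 1` and `y = x + 1`, the map `x` stabilizes the flag `0 < im n < ker n < ⊤`, so that
-- `y` moves each term into the preceding one. Hence `y ^ 2 = x ^ 2 + 1` kills `ker n` and maps into
-- `im n`.
theorem add_apply_apply_mem_range_of_commute {n : Cube →+ Cube} (hn : n.range ≤ n.ker)
    (hn0 : n ≠ 0) {x : Cube ≃ₗ[ZMod 2] Cube} (hnx : ∀ w, n (x w) = x (n w)) (w : Cube) :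
    x (x w) + w ∈ n.range ∧ (w ∈ n.ker → x (x w) + w = 0) := by
  obtain ⟨hbot, hrange, hker⟩ := relIndex_flag_eq_two hn hn0
  have hmem_bot (w : Cube) : x w ∈ (⊥ : AddSubgroup Cube) ↔ w ∈ (⊥ : AddSubgroup Cube) :=
    map_eq_zero_iff x x.injective
  have hmem_ker (w : Cube) : x w ∈ n.ker ↔ w ∈ n.ker := by
    rw [AddMonoidHom.mem_ker, AddMonoidHom.mem_ker, hnx, map_eq_zero_iff x x.injective]
  have hmem_range (w : Cube) : x w ∈ n.range ↔ w ∈ n.range := by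
    refine ⟨fun ⟨u, hu⟩ => ⟨x.symm u, x.injective ?_⟩, fun ⟨u, hu⟩ => ⟨x u, by rw [hnx, hu]⟩⟩
    rw [← hnx, x.apply_symm_apply, hu]
  let y (w : Cube) : Cube := x w + w
  have hy_top (w : Cube) : y w ∈ n.ker :=
    add_mem_of_relIndex_eq_two hker trivial trivial (hmem_ker w)
  have hy_ker {w : Cube} (hw : w ∈ n.ker) : y w ∈ n.range :=
    add_mem_of_relIndex_eq_two hrange ((hmem_ker w).2 hw) hw (hmem_range w)
  have hy_range {w : Cube} (hw : w ∈ n.range) : y w = 0 :=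
    add_mem_of_relIndex_eq_two hbot ((hmem_range w).2 hw) hw (hmem_bot w)
  have hyy : x (x w) + w = y (y w) := by
    change _ = x (x w + w) + (x w + w)
    rw [map_add, add_assoc, CharTwo.add_cancel_left]
  rw [hyy]
  exact ⟨hy_ker (hy_top w), fun hw => hy_range (hy_ker hw)⟩

theorem sq_eq_one_or_sq_eq_of_commute {c x : Cube ≃ₗ[ZMod 2] Cube} (hc : c ^ 2 = 1) (hc1 : c ≠ 1)
    (hcx : Commute c x) : x ^ 2 = 1 ∨ x ^ 2 = c := by
  let n : Cube →+ Cube := c.toLinearMap.toAddMonoidHom + AddMonoidHom.id Cube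
  have hcc (w : Cube) : c (c w) = w := by
    rw [← LinearEquiv.mul_apply, ← pow_two, hc, LinearEquiv.coe_one, id]
  have hn : n.range ≤ n.ker := by
    rintro _ ⟨w, rfl⟩
    change c (c w + w) + (c w + w) = 0
    rw [map_add, hcc, add_comm w, CharTwo.add_self_eq_zero]
  have hn0 : n ≠ 0 := fun h => hc1 <| LinearEquiv.ext fun w =>
    CharTwo.add_eq_zero.1 (DFunLike.congr_fun h w)
  have hy := add_apply_apply_mem_range_of_commute hn hn0 fun w => by
    change c (x w) + x w = x (c w + w)
    rw [map_add, show c (x w) = x (c w) from DFunLike.congr_fun hcx.eq w]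
  obtain ⟨hbot, -, hker⟩ := relIndex_flag_eq_two hn hn0
  by_cases hy0 : ∀ w, x (x w) + w = 0
  · exact Or.inl <| LinearEquiv.ext fun w => CharTwo.add_eq_zero.1 (hy0 w)
  push Not at hy0
  obtain ⟨v, hv⟩ := hy0
  have hvker : v ∉ n.ker := fun h => hv ((hy v).2 h)
  refine Or.inr <| LinearEquiv.ext fun w => add_right_cancel (b := w) ?_
  change x (x w) + w = n w
  by_cases hw : w ∈ n.ker
  · rw [(hy w).2 hw, AddMonoidHom.mem_ker.1 hw]
  have hvw : x (x w) + w = x (x v) + v := by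
    have h := (hy (w + v)).2 <| add_mem_of_relIndex_eq_two hker trivial trivial
      (iff_of_false hw hvker)
    rw [map_add, map_add, add_add_add_comm] at h
    exact CharTwo.add_eq_zero.1 h
  have h : x (x w) + w + n w = 0 :=
    add_mem_of_relIndex_eq_two hbot (hy w).1 ⟨w, rfl⟩ (iff_of_false (hvw ▸ hv) hw)
  exact CharTwo.add_eq_zero.1 h

end Centralizer

section LinearPart

variable {G Ω : Type*} [Group G] [MulAction G Ω]

/-- The homomorphism `φ` is the linear part of an affine structure on the `G`-set `Ω`: the labelling
`l` identifies `Ω` with a subset of the cube on which every `g : G` acts as the restriction of an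
affine map with linear part `φ g`. The affine map itself is determined by its effect on the
differences `l p + l q`, which exhaust the cube. -/
structure IsLinearPart (l : Ω → Cube) (φ : G →* (Cube ≃ₗ[ZMod 2] Cube)) : Prop where
  injective : Function.Injective l
  exists_add_eq : ∀ w, ∃ p q, l p + l q = w
  map_label_add : ∀ g p q, φ g (l p + l q) = l (g • p) + l (g • q)

theorem exists_isLinearPart_of_forall_exists {l : Ω → Cube} (hl : Function.Injective l)
    (hadd : ∀ w, ∃ p q, l p + l q = w)
    (hM : ∀ g : G, ∃ M : Module.End (ZMod 2) Cube, ∀ p q, M (l p + l q) = l (g • p) + l (g • q)) :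
    ∃ φ : G →* (Cube ≃ₗ[ZMod 2] Cube), IsLinearPart l φ := by
  choose M hM using hM
  let ψ : G →* Module.End (ZMod 2) Cube :=
    { toFun := M
      map_one' := LinearMap.ext fun w => by
        obtain ⟨p, q, rfl⟩ := hadd w
        rw [hM, one_smul, one_smul, Module.End.one_apply]
      map_mul' := fun g h => LinearMap.ext fun w => by
        obtain ⟨p, q, rfl⟩ := hadd w
        rw [Module.End.mul_apply, hM, hM, hM, mul_smul, mul_smul] }
  exact ⟨(LinearMap.GeneralLinearGroup.generalLinearEquiv (ZMod 2) Cube).toMonoidHom.comp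
    ψ.toHomUnits, hl, hadd, hM⟩

end LinearPart

section AffineStructure

variable {Ω : Type*} [DecidableEq Ω] {l : Ω → Cube} {A B C D : Finset Ω}

theorem exists_indicator_eq_cubeDot_add (hl : Function.Injective l) (hD : D.card = 4)
    (hsum : ∑ x ∈ D, l x = 0) :
    ∃ f c, ∀ p, (if p ∈ D then 1 else 0) = cubeDot f (l p) + c := by
  obtain ⟨f, c, hfc⟩ := exists_cubeDot_add_eq_one_iff (D.image l)
    (by rw [Finset.card_image_of_injective _ hl, hD]) (by rwa [Finset.sum_image hl.injOn])
  have h01 : ∀ c : ZMod 2, c ≠ 1 → 0 = c := by decide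
  refine ⟨f, c, fun p => ?_⟩
  have hp := hfc (l p)
  rw [hl.mem_finset_image] at hp
  split_ifs with h
  · exact (hp.1 h).symm
  · exact h01 _ (mt hp.2 h)

theorem exists_cubeLabel_eq_map_add (hl : Function.Injective l) (hA : A.card = 4)
    (hB : B.card = 4) (hC : C.card = 4) (hsA : ∑ x ∈ A, l x = 0) (hsB : ∑ x ∈ B, l x = 0)
    (hsC : ∑ x ∈ C, l x = 0) :
    ∃ (M : Module.End (ZMod 2) Cube) (c : Cube), ∀ p, cubeLabel A B C p = M (l p) + c := by
  obtain ⟨f₁, c₁, h₁⟩ := exists_indicator_eq_cubeDot_add hl hA hsA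
  obtain ⟨f₂, c₂, h₂⟩ := exists_indicator_eq_cubeDot_add hl hB hsB
  obtain ⟨f₃, c₃, h₃⟩ := exists_indicator_eq_cubeDot_add hl hC hsC
  let M : Cube →+ Cube := AddMonoidHom.mk'
    (fun w => (cubeDot f₁ w, cubeDot f₂ w, cubeDot f₃ w)) fun w w' => by
      simp only [cubeDot_add, Prod.mk_add_mk]
  exact ⟨M.toZModLinearMap 2, (c₁, c₂, c₃), fun p =>
    Prod.ext (h₁ p) (Prod.ext (h₂ p) (h₃ p))⟩

variable [Fintype Ω] {H : Subgroup (Equiv.Perm Ω)}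

open scoped Pointwise in
theorem exists_isLinearPart (hH : MulAction.IsPreprimitive H Ω) (hΩ : 7 ≤ Fintype.card Ω)
    (hsmall : ∀ g ∈ H, g.support.card ≤ 3 → g = 1) (hA : IsTetrad H A) :
    ∃ (l : Ω → Cube) (φ : H →* (Cube ≃ₗ[ZMod 2] Cube)), IsLinearPart l φ := by
  obtain ⟨B, C, hB, hC, hAB, hAC, hBC, hABC⟩ := exists_three_isTetrad hH hΩ hsmall hA
  let l := cubeLabel A B C
  have huniq := existsUnique_cubeLabel_eq hA.1 hB.1 hC.1 hAB hAC hBC hABC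
  have hinjOn : Set.InjOn l {x | l x ≠ 0} := fun x hx y _ hxy => (huniq _ hx).unique rfl hxy.symm
  have hsum (D) (hD : IsTetrad H D) : ∑ x ∈ D, l x = 0 :=
    sum_cubeLabel_eq_zero (hD.even_card_inter hH hΩ hsmall hA)
      (hD.even_card_inter hH hΩ hsmall hB) (hD.even_card_inter hH hΩ hsmall hC)
  have hadd (w : Cube) : ∃ p q, l p + l q = w := by
    obtain ⟨u, v, hu, hv, rfl⟩ : ∃ u v : Cube, u ≠ 0 ∧ v ≠ 0 ∧ u + v = w := by decide +revert
    exact ⟨_, _, congrArg₂ _ (huniq u hu).exists.choose_spec (huniq v hv).exists.choose_spec⟩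
  have hne : ∃ x, l x ≠ 0 := by
    obtain ⟨p, hp, -⟩ := huniq (1, 0, 0) (by decide)
    exact ⟨p, hp.trans_ne (by decide)⟩
  have hl : Function.Injective l := fun x y hxy => by
    by_cases hx : l x = 0
    · exact eq_of_label_eq_zero hH hΩ hsmall hA hinjOn hne hsum hx (hxy ▸ hx)
    · exact hinjOn hx (hxy ▸ hx : l y ≠ 0) hxy
  refine ⟨l, exists_isLinearPart_of_forall_exists hl hadd fun g => ?_⟩
  have hg {D} (hD : IsTetrad H D) : IsTetrad H ((g : Equiv.Perm Ω)⁻¹ • D) :=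
    hD.smul (H.inv_mem g.2)
  obtain ⟨M, c, hMc⟩ := exists_cubeLabel_eq_map_add hl (hg hA).1 (hg hB).1 (hg hC).1
    (hsum _ (hg hA)) (hsum _ (hg hB)) (hsum _ (hg hC))
  have hM (p : Ω) : l (g • p) = M (l p) + c := by
    rw [← hMc]
    simp only [l, cubeLabel, Finset.mem_inv_smul_finset_iff]
    rfl
  refine ⟨M, fun p q => ?_⟩
  rw [hM, hM, map_add, add_add_add_comm, CharTwo.add_self_eq_zero, add_zero]

end AffineStructure

namespace IsLinearPart

variable {G Ω : Type*} [Group G] [MulAction G Ω] {l : Ω → Cube}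
  {φ : G →* (Cube ≃ₗ[ZMod 2] Cube)} {g h : G}

theorem exists_translation (hφ : IsLinearPart l φ) (hg : g ∈ φ.ker) :
    ∃ t, ∀ p, l (g • p) = l p + t := by
  obtain ⟨q, -, -⟩ := hφ.exists_add_eq 0
  refine ⟨l q + l (g • q), fun p => ?_⟩
  have h := hφ.map_label_add g p q
  rw [MonoidHom.mem_ker.1 hg, LinearEquiv.coe_one, id] at h
  rw [← add_assoc, h, CharTwo.add_cancel_right]

theorem eq_one_of_card_odd [Fintype Ω] [FaithfulSMul G Ω] (hφ : IsLinearPart l φ)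
    (hΩ : Odd (Fintype.card Ω)) (hg : g ∈ φ.ker) : g = 1 := by
  obtain ⟨t, ht⟩ := hφ.exists_translation hg
  have hsum : ∑ p, l p = ∑ p, l p + Fintype.card Ω • t :=
    calc ∑ p, l p = ∑ p, l (g • p) := (Equiv.sum_comp (MulAction.toPerm g) l).symm
      _ = _ := by simp only [ht, Finset.sum_add_distrib, Finset.sum_const, Finset.card_univ]
  have ht0 : t = 0 := by
    obtain ⟨c, hc⟩ := hΩ
    rw [left_eq_add, hc, succ_nsmul, mul_nsmul', CharTwo.two_nsmul, zero_add] at hsum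
    exact hsum
  exact eq_of_smul_eq_smul fun p : Ω => hφ.injective (by rw [ht, ht0, add_zero, one_smul])

theorem commute_of_mem_ker [FaithfulSMul G Ω] (hφ : IsLinearPart l φ) (hg : g ∈ φ.ker)
    (hh : h ∈ φ.ker) : Commute g h := by
  obtain ⟨t, ht⟩ := hφ.exists_translation hg
  obtain ⟨u, hu⟩ := hφ.exists_translation hh
  refine eq_of_smul_eq_smul fun p : Ω => hφ.injective ?_
  rw [mul_smul, mul_smul, ht, hu, hu, ht, add_right_comm]

theorem eq_of_smul_eq [FaithfulSMul G Ω] (hφ : IsLinearPart l φ) (hg : g ∈ φ.ker)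
    (hh : h ∈ φ.ker) {p : Ω} (hp : g • p = h • p) : g = h := by
  obtain ⟨t, ht⟩ := hφ.exists_translation hg
  obtain ⟨u, hu⟩ := hφ.exists_translation hh
  have htu : t = u := add_left_cancel (by rw [← ht, ← hu, hp] : l p + t = l p + u)
  exact eq_of_smul_eq_smul fun q : Ω => hφ.injective (by rw [ht, hu, htu])

-- The fixed space of `a` is invariant, so it is trivial or everything; and it contains `a w + w`.
theorem eq_one_of_sq_eq_one_of_commute [MulAction.IsPreprimitive G Ω] (hφ : IsLinearPart l φ)
    {a : Cube ≃ₗ[ZMod 2] Cube} (ha : a ^ 2 = 1) (hcomm : ∀ g, Commute a (φ g)) : a = 1 := by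
  let s : Setoid Ω :=
    { r := fun p q => a (l p + l q) = l p + l q
      iseqv := ⟨fun p => by rw [CharTwo.add_self_eq_zero, map_zero],
        fun {p q} h => by rwa [add_comm],
        fun {p q r} h h' => by
          rw [← CharTwo.add_cancel_right (l p) (l q), add_assoc _ (l q), map_add, h, h']⟩ }
  refine LinearEquiv.ext fun w => ?_
  rcases eq_bot_or_eq_top_of_invariant_setoid s (G := G) fun g {p q} hpq => by
    change a (l (g • p) + l (g • q)) = _
    rw [← hφ.map_label_add, ← LinearEquiv.mul_apply, (hcomm g).eq, LinearEquiv.mul_apply,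
      hpq] with hs | hs
  · obtain ⟨p, q, hpq⟩ := hφ.exists_add_eq (a w + w)
    have hfix : s p q := by
      change a (l p + l q) = l p + l q
      rw [hpq, map_add, ← LinearEquiv.mul_apply, ← pow_two, ha, add_comm]
      rfl
    obtain rfl : p = q := show (⊥ : Setoid Ω) p q from hs ▸ hfix
    rw [CharTwo.add_self_eq_zero] at hpq
    exact CharTwo.add_eq_zero.1 hpq.symm
  · obtain ⟨p, q, rfl⟩ := hφ.exists_add_eq w
    exact (hs ▸ trivial : s p q)

-- The translations in `K` form a normal subgroup `N`. If it were transitive, then some element of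
-- `N` would agree with the translation `g` at a point, hence everywhere.
theorem disjoint_ker_of_closure_insert_eq_top [FaithfulSMul G Ω] [MulAction.IsPreprimitive G Ω]
    (hφ : IsLinearPart l φ) {K : Subgroup G} (hg : g ∈ φ.ker) (hgK : g ∉ K)
    (hgen : Subgroup.closure (insert g (K : Set G)) = ⊤) : Disjoint K φ.ker := by
  have hnormal : (K ⊓ φ.ker).Normal := by
    rw [← Subgroup.normalizer_eq_top_iff, eq_top_iff, ← hgen, Subgroup.closure_le,
      Set.insert_subset_iff]
    refine ⟨Subgroup.centralizer_le_normalizer _ ?_, fun x hx => ?_⟩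
    · exact Subgroup.mem_centralizer_iff.2 fun x hx => (hφ.commute_of_mem_ker hx.2 hg).eq
    · exact Subgroup.inf_normalizer_le_normalizer_inf
        ⟨Subgroup.le_normalizer hx, Subgroup.subset_normalizer_of_normal (Set.mem_univ x)⟩
  rcases eq_bot_or_isPretransitive_of_normal (Ω := Ω) (K ⊓ φ.ker) with hN | hN
  · exact disjoint_iff.2 hN
  · obtain ⟨p, -, -⟩ := hφ.exists_add_eq 0
    obtain ⟨x, hx⟩ := MulAction.exists_smul_eq (K ⊓ φ.ker : Subgroup G) p (g • p)
    exact absurd (hφ.eq_of_smul_eq x.2.2 hg hx ▸ x.2.1) hgK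

end IsLinearPart

namespace IsIndepString

section LinearPart

variable {G Ω : Type*} [Group G] {k : ℕ} {β : Fin k → G} {φ : G →* (Cube ≃ₗ[ZMod 2] Cube)}
  {l : Ω → Cube}

theorem false_of_disjoint_ker (hβ : IsIndepString β) {K : Subgroup G} (hK : Disjoint K φ.ker)
    {i j m : Fin k} (hi : β i ∈ K) (hj : β j ∈ K) (hm : β m ∈ K) (hij : ¬ Commute (β i) (β j))
    (hmi : Commute (β m) (β i)) (hmj : Commute (β m) (β j)) : False := by
  have eq_one {x : G} (hx : x ∈ K) (hφx : φ x = 1) : x = 1 :=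
    (Subgroup.disjoint_def.1 hK) hx hφx
  have hmem : (β i * β j) ^ 2 ∈ K := K.pow_mem (K.mul_mem hi hj) 2
  rcases sq_eq_one_or_sq_eq_of_commute (by rw [← map_pow, hβ.sq_eq_one, map_one])
    (fun h => hβ.ne_one m (eq_one hm h)) ((hmi.mul_right hmj).map φ) with h | h
  · exact hβ.mul_sq_ne_one hij (eq_one hmem (by rw [map_pow, h]))
  · have hsq : (β i * β j) ^ 2 = β m := eq_of_mul_inv_eq_one <| eq_one
      (K.mul_mem hmem (K.inv_mem hm)) (by rw [map_mul, map_pow, h, map_inv, mul_inv_cancel])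
    have hne {t : Fin k} (ht : t ≠ m) : β t ∈ Subgroup.closure (β '' {m}ᶜ) :=
      Subgroup.subset_closure ⟨t, ht, rfl⟩
    refine hβ.notMem m (hsq ▸ Subgroup.pow_mem _ (Subgroup.mul_mem _ (hne ?_) (hne ?_)) 2)
    · rintro rfl
      exact hij hmj
    · rintro rfl
      exact hij hmi.symm

variable [MulAction G Ω] [FaithfulSMul G Ω] [MulAction.IsPreprimitive G Ω]

theorem false_of_ker_eq_bot (hβ : IsIndepString β) (hgen : Subgroup.closure (Set.range β) = ⊤)
    (hΩ : 2 < Nat.card Ω) (hk : 4 ≤ k) (hφ : φ.ker = ⊥) : False :=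
  hβ.false_of_disjoint_ker (K := ⊤) (m := ⟨k - 1, by omega⟩) (hφ ▸ disjoint_bot_right) trivial
    trivial trivial (hβ.not_commute_head hgen hΩ (by omega))
    (hβ.commute _ _ (by lia)).symm (hβ.commute _ _ (by lia)).symm

-- Otherwise `β 0` is a translation, and the remaining involutions generate a group without
-- translations, which contains the last two involutions and `β 1`.
theorem not_commute_map_head (hβ : IsIndepString β)
    (hgen : Subgroup.closure (Set.range β) = ⊤) (hΩ : 2 < Nat.card Ω) (hk : 5 ≤ k)
    (hφ : IsLinearPart l φ) :
    ¬ Commute (φ (β ⟨0, by omega⟩)) (φ (β ⟨1, by omega⟩)) := by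
  intro hcomm
  let K := Subgroup.closure (β '' {⟨0, by omega⟩}ᶜ)
  have hK {j : Fin k} (hj : (j : ℕ) ≠ 0) : β j ∈ K :=
    Subgroup.subset_closure ⟨j, fun h => hj (congrArg Fin.val h), rfl⟩
  have hcentral (g : G) : Commute (φ (β ⟨0, by omega⟩)) (φ g) := by
    have hle : (⊤ : Subgroup G) ≤ (Subgroup.centralizer {φ (β ⟨0, by omega⟩)}).comap φ := by
      rw [← hgen, Subgroup.closure_le]
      rintro _ ⟨j, rfl⟩
      refine Subgroup.mem_centralizer_singleton_iff.2 ?_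
      by_cases hj : (j : ℕ) = 1
      · rw [show j = ⟨1, by omega⟩ from Fin.ext hj]
        exact hcomm.symm
      · exact (hβ.commute_of_ne (by simp) (by simpa using Ne.symm hj)).map φ
    exact (Subgroup.mem_centralizer_singleton_iff.1 (hle (Subgroup.mem_top g))).symm
  have hker : β ⟨0, by omega⟩ ∈ φ.ker := hφ.eq_one_of_sq_eq_one_of_commute
    (by rw [← map_pow, hβ.sq_eq_one, map_one]) hcentral
  have htop : Subgroup.closure (insert (β ⟨0, by omega⟩) (K : Set G)) = ⊤ := by
    rw [eq_top_iff, ← hgen, Subgroup.closure_le]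
    rintro _ ⟨j, rfl⟩
    refine Subgroup.subset_closure ?_
    by_cases hj : (j : ℕ) = 0
    · exact Or.inl (congrArg β (Fin.ext hj))
    · exact Or.inr (hK hj)
  exact hβ.false_of_disjoint_ker (m := ⟨1, by omega⟩)
    (hφ.disjoint_ker_of_closure_insert_eq_top hker (hβ.notMem _) htop)
    (hK (by lia)) (hK (by lia)) (hK (by simp))
    (hβ.not_commute_tail hgen hΩ (by omega)) (hβ.commute _ _ (by lia))
    (hβ.commute _ _ (by lia))

theorem not_commute_map_tail (hβ : IsIndepString β)
    (hgen : Subgroup.closure (Set.range β) = ⊤) (hΩ : 2 < Nat.card Ω) (hk : 5 ≤ k)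
    (hφ : IsLinearPart l φ) :
    ¬ Commute (φ (β ⟨k - 2, by omega⟩)) (φ (β ⟨k - 1, by omega⟩)) := by
  have h0 : Fin.rev (⟨0, by omega⟩ : Fin k) = ⟨k - 1, by omega⟩ := Fin.ext (by simp [Fin.val_rev])
  have h1 : Fin.rev (⟨1, by omega⟩ : Fin k) = ⟨k - 2, by omega⟩ :=
    Fin.ext (by simp [Fin.val_rev])
  have h := hβ.rev.not_commute_map_head (by rwa [Fin.rev_surjective.range_comp]) hΩ hk hφ
  rw [Function.comp_apply, Function.comp_apply, h0, h1] at h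
  exact fun hcomm => h hcomm.symm

-- The linear parts of the last two involutions lie in `{1, x ^ 2}`, where `x` is the product of
-- the linear parts of the first two.
theorem false_of_isLinearPart (hβ : IsIndepString β)
    (hgen : Subgroup.closure (Set.range β) = ⊤) (hΩ : 2 < Nat.card Ω) (hk : 5 ≤ k)
    (hφ : IsLinearPart l φ) : False := by
  have hsq (j : Fin k) : φ (β j) ^ 2 = 1 := by rw [← map_pow, hβ.sq_eq_one, map_one]
  let x := φ (β ⟨0, by omega⟩) * φ (β ⟨1, by omega⟩)
  have hx : x ^ 2 ≠ 1 := fun h => hβ.not_commute_map_head hgen hΩ hk hφ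
    ((commute_iff_mul_sq_eq_one (hsq _) (hsq _)).2 h)
  have hmap {j : Fin k} (hj : 2 < (j : ℕ)) : φ (β j) = 1 ∨ x ^ 2 = φ (β j) := by
    refine or_iff_not_imp_left.2 fun hj1 => (sq_eq_one_or_sq_eq_of_commute (hsq j) hj1
      (Commute.mul_right ?_ ?_)).resolve_left hx
    · exact ((hβ.commute ⟨0, by omega⟩ j (by lia)).map φ).symm
    · exact ((hβ.commute ⟨1, by omega⟩ j (by lia)).map φ).symm
  apply hβ.not_commute_map_tail hgen hΩ hk hφ
  rcases hmap (j := ⟨k - 2, by omega⟩) (by lia) with h | h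
  · exact h ▸ Commute.one_left _
  rcases hmap (j := ⟨k - 1, by omega⟩) (by lia) with h' | h'
  · exact h' ▸ Commute.one_right _
  · exact h ▸ h' ▸ Commute.refl _

end LinearPart

section Action

variable {G Ω : Type*} [Group G] [MulAction G Ω] [Finite Ω] [FaithfulSMul G Ω]
  [MulAction.IsPreprimitive G Ω] {k : ℕ} {β : Fin k → G}

theorem exists_card_moved_le_four (hβ : IsIndepString β)
    (hgen : Subgroup.closure (Set.range β) = ⊤) (hΩ : 7 ≤ Nat.card Ω) (hk : Nat.card Ω ≤ k + 3) :
    ∃ g : G, g ^ 2 = 1 ∧ g ≠ 1 ∧ {p : Ω | g • p ≠ p}.ncard ≤ 4 := by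
  by_contra! hlarge
  let e (t : Fin ((k + 1) / 2)) : Fin k := ⟨2 * t, by omega⟩
  have he : Function.Injective e := fun s t h => by
    simp only [e, Fin.mk.injEq] at h
    exact Fin.ext (by omega)
  rcases hβ.exists_card_moved_le_four_or_exists_free_point (Ω := Ω) he
    (by intro s t; simp only [e]; omega) (by omega) (by rw [Fintype.card_fin]; omega) with
    ⟨g, hg2, hg1, hg⟩ | ⟨h3, h8, p, hp⟩
  · exact (hlarge g hg2 hg1).not_ge hg
  have hle : 8 ≤ Nat.card Ω := h8 ▸ Nat.card_le_card_of_injective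
    (fun g : Subgroup.closure (Set.range (β ∘ e)) => g • p) fun g h hgh =>
      Subtype.ext <| inv_mul_eq_one.1 <| hp _ (g⁻¹ * h).2 <|
        (mul_smul _ _ p).trans (inv_smul_eq_iff.2 hgh.symm)
  rw [Fintype.card_fin] at h3
  rcases hle.eq_or_lt with h | h
  · exact hβ.false_of_card_eq_eight hgen (by omega) h.symm hlarge
  · obtain rfl : k = 6 := by omega
    exact hβ.false_of_card_eq_nine hgen (by omega) hlarge

end Action

section Perm

variable {Ω : Type*} [Fintype Ω] [DecidableEq Ω] {k : ℕ} {α : Fin k → Equiv.Perm Ω}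

theorem alternatingGroup_le (hα : IsIndepString α)
    (hH : MulAction.IsPreprimitive (Subgroup.closure (Set.range α)) Ω)
    (hΩ : 7 ≤ Fintype.card Ω) (hk : Fintype.card Ω ≤ k + 3) :
    alternatingGroup Ω ≤ Subgroup.closure (Set.range α) := by
  by_contra hcon
  let H := Subgroup.closure (Set.range α)
  have hsmall : ∀ g ∈ H, g.support.card ≤ 3 → g = 1 := fun g hg h3 => by_contra fun h1 =>
    hcon (alternatingGroup_le_of_card_support_le_three hH hg h1 h3)
  let β (i : Fin k) : H := ⟨α i, Subgroup.subset_closure ⟨i, rfl⟩⟩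
  have hβ : IsIndepString β := .of_map H.subtype H.subtype_injective hα
  have hgen : Subgroup.closure (Set.range β) = ⊤ := by
    rw [← Subgroup.closure_closure_coe_preimage (k := Set.range α)]
    congr 1
    ext g
    simp only [β, Set.mem_range, Set.mem_preimage, Subtype.ext_iff]
  obtain ⟨g, hg2, hg1, h4⟩ := hβ.exists_card_moved_le_four hgen (Ω := Ω)
    (by rwa [Nat.card_eq_fintype_card]) (by rwa [Nat.card_eq_fintype_card])
  replace h4 : (g : Equiv.Perm Ω).support.card ≤ 4 := by
    rwa [← Set.ncard_coe_finset, coe_support_eq_set_support]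
  have hA : IsTetrad H (g : Equiv.Perm Ω).support :=
    ⟨le_antisymm h4 (not_lt.1 fun h => hg1 (Subtype.ext (hsmall g g.2 (by omega)))),
      g, g.2, congrArg Subtype.val hg2, rfl⟩
  obtain ⟨l, φ, hφ⟩ := exists_isLinearPart hH hΩ hsmall hA
  have hΩ2 : 2 < Nat.card Ω := by
    rw [Nat.card_eq_fintype_card]
    omega
  rcases hΩ.eq_or_lt with h | h
  · exact hβ.false_of_ker_eq_bot hgen hΩ2 (by omega) <| (Subgroup.eq_bot_iff_forall _).2 fun _ =>
      hφ.eq_one_of_card_odd (h ▸ by decide)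
  · exact hβ.false_of_isLinearPart hgen hΩ2 (by omega) hφ

end Perm

end IsIndepString

section InducedAction

variable {ι X Y : Type*} {ρ : ι → Equiv.Perm X} {π : ι → Equiv.Perm Y} {b : X → Y}

theorem exists_mem_closure_semiconj (hπ : ∀ i, Function.Semiconj b (ρ i) (π i))
    {g : Equiv.Perm X} (hg : g ∈ Subgroup.closure (Set.range ρ)) :
    ∃ h ∈ Subgroup.closure (Set.range π), Function.Semiconj b g h := by
  induction hg using Subgroup.closure_induction with
  | mem g hg =>
    obtain ⟨i, rfl⟩ := hg
    exact ⟨π i, Subgroup.subset_closure ⟨i, rfl⟩, hπ i⟩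
  | one => exact ⟨1, Subgroup.one_mem _, fun _ => rfl⟩
  | mul g g' _ _ ihg ihg' =>
    obtain ⟨h, hh, hgh⟩ := ihg
    obtain ⟨h', hh', hgh'⟩ := ihg'
    exact ⟨h * h', Subgroup.mul_mem _ hh hh', hgh.comp_right hgh'⟩
  | inv g _ ih =>
    obtain ⟨h, hh, hgh⟩ := ih
    exact ⟨h⁻¹, Subgroup.inv_mem _ hh, hgh.inverses_right g.apply_symm_apply h.symm_apply_apply⟩

theorem isPreprimitive_of_maximal_fibers (hb : Function.Surjective b)
    (hπ : ∀ i, Function.Semiconj b (ρ i) (π i))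
    (htrans : MulAction.IsPretransitive (Subgroup.closure (Set.range ρ)) X)
    (hmax : ∀ (c : Y) (S : Set X), MulAction.IsBlock (Subgroup.closure (Set.range ρ)) S →
      {x | b x = c} ⊆ S → S = {x | b x = c} ∨ S = Set.univ) :
    MulAction.IsPreprimitive (Subgroup.closure (Set.range π)) Y := by
  choose φ hφ hbφ using fun g : Subgroup.closure (Set.range ρ) => exists_mem_closure_semiconj hπ g.2
  let f : X →ₑ[fun g => (⟨φ g, hφ g⟩ : Subgroup.closure (Set.range π))] Y := ⟨b, hbφ⟩
  have : MulAction.IsPretransitive (Subgroup.closure (Set.range π)) Y :=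
    htrans.of_surjective_map (f := f) hb
  refine ⟨fun {S} hS => ?_⟩
  rcases S.eq_empty_or_nonempty with rfl | ⟨c, hc⟩
  · exact Or.inl Set.subsingleton_empty
  rw [← Set.image_preimage_eq S hb]
  have hsub : {x | b x = c} ⊆ b ⁻¹' S := fun x (hx : b x = c) => by rwa [Set.mem_preimage, hx]
  rcases hmax c (b ⁻¹' S) (hS.preimage f) hsub with h | h
  · exact Or.inl <| Set.subsingleton_of_subset_singleton (a := c) <|
      h ▸ Set.image_preimage_subset b {c}
  · exact Or.inr (h ▸ Set.image_univ_of_surjective hb)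

end InducedAction

section IndependentGenerators

variable {r : ℕ}

theorem IsIndepString.of_strictMono {G : Type*} [Group G] {k : ℕ} {π : Fin r → G}
    (hsq : ∀ i, π i ^ 2 = 1) (hcomm : ∀ i j : Fin r, (i : ℕ) + 1 < j → Commute (π i) (π j))
    {e : Fin k → Fin r} (he : StrictMono e)
    (hind : ∀ l ∈ Set.range e, π l ∉ Subgroup.closure (π '' (Set.range e \ {l}))) :
    IsIndepString (π ∘ e) where
  sq_eq_one _ := hsq _
  commute i j hij := by
    have h₁ : e i < e ⟨i + 1, by omega⟩ := he (Fin.lt_def.2 (Nat.lt_succ_self _))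
    have h₂ : e ⟨i + 1, by omega⟩ < e j := he (Fin.lt_def.2 hij)
    exact hcomm _ _ (by simp only [Fin.lt_def] at h₁ h₂; omega)
  notMem i h := by
    refine hind _ ⟨i, rfl⟩ (Subgroup.closure_mono ?_ h)
    rintro _ ⟨j, hj, rfl⟩
    exact ⟨_, ⟨⟨j, rfl⟩, fun h => hj (he.injective h)⟩, rfl⟩

theorem closure_range_eq_top_or_eq_alternatingGroup {Y : Type*} [Fintype Y] [DecidableEq Y]
    {π : Fin r → Equiv.Perm Y} (hsq : ∀ i, π i ^ 2 = 1)
    (hcomm : ∀ i j : Fin r, (i : ℕ) + 1 < j → Commute (π i) (π j))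
    (hπ : MulAction.IsPreprimitive (Subgroup.closure (Set.range π)) Y) {L : Set (Fin r)}
    (hgen : Subgroup.closure (π '' L) = Subgroup.closure (Set.range π))
    (hind : ∀ l ∈ L, π l ∉ Subgroup.closure (π '' (L \ {l})))
    (hY : 7 ≤ Fintype.card Y) (hL : Fintype.card Y ≤ L.ncard + 3) :
    Subgroup.closure (Set.range π) = ⊤ ∨
      Subgroup.closure (Set.range π) = alternatingGroup Y := by
  classical
  rw [Set.ncard_eq_toFinset_card'] at hL
  let e := L.toFinset.orderEmbOfFin rfl
  have he : Set.range e = L := by rw [Finset.range_orderEmbOfFin, Set.coe_toFinset]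
  have hα : IsIndepString (π ∘ e) := .of_strictMono hsq hcomm e.strictMono (by rwa [he])
  have hrange : Subgroup.closure (Set.range (π ∘ e)) = Subgroup.closure (Set.range π) := by
    rw [Set.range_comp, he, hgen]
  have halt := hα.alternatingGroup_le (by rwa [hrange]) hY hL
  rw [hrange] at halt
  exact eq_top_or_eq_alternatingGroup halt

end IndependentGenerators

theorem IsSggi.sq_eq_one {n r : ℕ} {ρ : Fin r → Equiv.Perm (Fin n)} (hρ : IsSggi ρ) (i : Fin r) :
    ρ i ^ 2 = 1 := by
  rw [← hρ.1 i, pow_orderOf_eq_one]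

theorem IsSggi.commute {n r : ℕ} {ρ : Fin r → Equiv.Perm (Fin n)} (hρ : IsSggi ρ) {i j : Fin r}
    (hij : (i : ℕ) + 1 < j) : Commute (ρ i) (ρ j) :=
  (commute_iff_mul_sq_eq_one (hρ.sq_eq_one i) (hρ.sq_eq_one j)).2 <|
    hρ.2 i j (by rw [abs_sub_comm, lt_abs]; omega)

theorem stmt12_general {r : ℕ} {X Y : Type*} [Fintype Y] [DecidableEq Y]
    (hY : 7 ≤ Fintype.card Y) (hr : Fintype.card Y ≤ r) (ρ : Fin r → Equiv.Perm X)
    (hsq : ∀ i, ρ i ^ 2 = 1) (hcomm : ∀ i j : Fin r, (i : ℕ) + 1 < j → Commute (ρ i) (ρ j))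
    (htrans : MulAction.IsPretransitive (Subgroup.closure (Set.range ρ)) X)
    (b : X → Y) (hb : Function.Surjective b)
    (hmax : ∀ (c : Y) (S : Set X), MulAction.IsBlock (Subgroup.closure (Set.range ρ)) S →
      {x | b x = c} ⊆ S → S = {x | b x = c} ∨ S = Set.univ)
    (π : Fin r → Equiv.Perm Y) (hπ : ∀ i x, b (ρ i x) = π i (b x)) (L : Set (Fin r))
    (hLgen : Subgroup.closure (π '' L) = Subgroup.closure (Set.range π))
    (hLind : ∀ l ∈ L, π l ∉ Subgroup.closure (π '' (L \ {l}))) (hL : Lᶜ.ncard ≤ 3) :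
    Subgroup.closure (Set.range π) = ⊤ ∨
      Subgroup.closure (Set.range π) = alternatingGroup Y := by
  have hπsq (i) : π i ^ 2 = 1 := Equiv.ext <| hb.forall.2 fun x => by
    rw [pow_two, mul_apply, ← hπ, ← hπ, apply_apply_of_sq_eq_one (hsq i), one_apply]
  have hπcomm (i j : Fin r) (hij : (i : ℕ) + 1 < j) : Commute (π i) (π j) :=
    Equiv.ext <| hb.forall.2 fun x => by
      simp only [mul_apply, ← hπ]
      exact congrArg b (DFunLike.congr_fun (hcomm i j hij).eq x)
  have hcard := Set.ncard_add_ncard_compl L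
  rw [Nat.card_eq_fintype_card, Fintype.card_fin] at hcard
  exact closure_range_eq_top_or_eq_alternatingGroup hπsq hπcomm
    (isPreprimitive_of_maximal_fibers hb hπ htrans hmax) hLgen hLind hY (by omega)

theorem stmt12 {n r m : ℕ} (hm7 : 7 ≤ m) (hn : n = 2 * m) (hr : n / 2 ≤ r)
    (ρ : Fin r → Equiv.Perm (Fin n)) (hstring : IsStringC ρ)
    (htrans : MulAction.IsPretransitive ↥(Subgroup.closure (Set.range ρ)) (Fin n))
    (b : Fin n → Fin m) (hbsurj : Function.Surjective b)
    (hfib : ∀ c : Fin m, Set.ncard {x | b x = c} = 2)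
    (hcompat : ∀ g ∈ Subgroup.closure (Set.range ρ), ∀ x y : Fin n,
      b x = b y → b (g x) = b (g y))
    -- every fiber of b is a maximal block
    (hmax : ∀ (c : Fin m) (X : Set (Fin n)),
      MulAction.IsBlock ↥(Subgroup.closure (Set.range ρ)) X →
      {x | b x = c} ⊆ X → X = {x | b x = c} ∨ X = Set.univ)
    -- π l is the induced block permutation φ (ρ l)
    (π : Fin r → Equiv.Perm (Fin m))
    (hπ : ∀ (l : Fin r) (x : Fin n), b (ρ l x) = π l (b x))
    -- L generates the image of φ independently
    (L : Set (Fin r))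
    (hLgen : Subgroup.closure (π '' L) = Subgroup.closure (Set.range π))
    (hLind : ∀ l ∈ L, π l ∉ Subgroup.closure (π '' (L \ {l})))
    -- |R ∪ C| = 3
    (hRC : ({i : Fin r | i ∉ L ∧ ¬ ∀ l ∈ L, Commute (ρ i) (ρ l)} ∪
            {i : Fin r | i ∉ L ∧ ∀ l ∈ L, Commute (ρ i) (ρ l)}).ncard = 3) :
    Subgroup.closure (Set.range π) = ⊤ ∨
      Subgroup.closure (Set.range π) = alternatingGroup (Fin m) := by
  have hR : {i : Fin r | i ∉ L ∧ ¬ ∀ l ∈ L, Commute (ρ i) (ρ l)} ∪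
      {i : Fin r | i ∉ L ∧ ∀ l ∈ L, Commute (ρ i) (ρ l)} = Lᶜ := by
    ext i
    simp only [Set.mem_union, Set.mem_ofPred_eq, Set.mem_compl_iff]
    tauto
  exact stmt12_general (by rwa [Fintype.card_fin]) (by rw [Fintype.card_fin]; omega) ρ
    hstring.1.sq_eq_one (fun _ _ => hstring.1.commute) htrans b hbsurj hmax π hπ L hLgen hLind
    (hR ▸ hRC).le
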